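/- arXiv:2512.23534 — 3 statements merged into one kernel-verified Lean document; each statement's English description precedes it below -/
import Mathlib

section
/- The sum Σ_{n=1}^{∞} Λ(n)²/n² converges and is strictly less than 0.8053, where Λ is the von Mangoldt function. -/
open ArithmeticFunction

/-!
Differentiating `L Λ = -ζ' / ζ` gives `∑ log n * Λ n / n ^ k = ζ'' / ζ - (ζ' / ζ) ^ 2`. The terms
`Λ n` and `log n` differ on the support of `Λ` only at proper prime powers, where
`Λ n * (log n - Λ n) = j * (log p) ^ 2` for `n = p ^ (j + 1)`; summing over `j`,
`∑ Λ n ^ 2 / n ^ k = ζ'' / ζ - (ζ' / ζ) ^ 2 - ∑_p (log p / (p ^ k - 1)) ^ 2` at `k`.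

For `k = 2` it remains to bound `ζ''(2)` from above, and `-ζ'(2)` and the sum over primes from
below. The tails of the two derivatives from `n = 50` on are compared with telescoping series, and
the logarithms of the integers up to `50` are enclosed between rationals.
-/

open Filter Topology LSeries
open scoped LSeries.notation

lemma abscissaOfAbsConv_vonMangoldt_le : abscissaOfAbsConv ↗Λ ≤ 1 :=
  abscissaOfAbsConv_le_of_forall_lt_LSeriesSummable fun _ hy => LSeriesSummable_vonMangoldt hy

lemma LSeries_vonMangoldt_eq_logMul_div {s : ℂ} (hs : 1 < s.re) :
    L ↗Λ s = L (logMul 1) s / L 1 s := by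
  rw [LSeries_vonMangoldt_eq hs, LSeries_deriv (by rw [abscissaOfAbsConv_one]; exact_mod_cast hs),
    neg_neg]

lemma LSeries_logMul_vonMangoldt {s : ℂ} (hs : 1 < s.re) :
    L (logMul ↗Λ) s = L (logMul^[2] 1) s / L 1 s - (L (logMul 1) s / L 1 s) ^ 2 := by
  have hs' : (1 : EReal) < s.re := mod_cast hs
  have hΛ := LSeries_hasDerivAt (abscissaOfAbsConv_vonMangoldt_le.trans_lt hs')
  have h₀ : HasDerivAt (L 1) (-L (logMul 1) s) s :=
    LSeries_hasDerivAt (by rwa [abscissaOfAbsConv_one])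
  have h₁ : HasDerivAt (L (logMul 1)) (-L (logMul^[2] 1) s) s :=
    LSeries_hasDerivAt (by rwa [abscissaOfAbsConv_logMul, abscissaOfAbsConv_one])
  have hne : L 1 s ≠ 0 := LSeries_one_ne_zero_of_one_lt_re hs
  have heq : L ↗Λ =ᶠ[𝓝 s] L (logMul 1) / L 1 := by
    filter_upwards [(isOpen_lt continuous_const Complex.continuous_re).mem_nhds hs] with z hz
    exact LSeries_vonMangoldt_eq_logMul_div hz
  rw [← neg_inj, hΛ.unique ((h₁.div h₀ hne).congr_of_eventuallyEq heq)]
  field_simp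
  ring

lemma LSeries_term_natCast (f : ℕ → ℂ) {k : ℕ} (hk : k ≠ 0) :
    LSeries.term f k = fun n : ℕ => f n / (n : ℂ) ^ k := by
  ext n
  rcases eq_or_ne n 0 with rfl | hn
  · simp [hk]
  · rw [LSeries.term_of_ne_zero hn, Complex.cpow_natCast]

lemma LSeriesSummable_ofReal_natCast_iff {f : ℕ → ℝ} {k : ℕ} (hk : k ≠ 0) :
    LSeriesSummable (fun n => (f n : ℂ)) k ↔ Summable fun n : ℕ => f n / (n : ℝ) ^ k := by
  rw [LSeriesSummable, LSeries_term_natCast _ hk, ← Complex.summable_ofReal]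
  push_cast
  rfl

lemma LSeries_ofReal_natCast (f : ℕ → ℝ) {k : ℕ} (hk : k ≠ 0) :
    LSeries (fun n => (f n : ℂ)) k = ((∑' n : ℕ, f n / (n : ℝ) ^ k : ℝ) : ℂ) := by
  rw [LSeries, LSeries_term_natCast _ hk, Complex.ofReal_tsum]
  push_cast
  rfl

lemma logMul_ofReal (f : ℕ → ℝ) :
    logMul (fun n => (f n : ℂ)) = fun n : ℕ => ((Real.log n * f n : ℝ) : ℂ) := by
  ext n
  simp [logMul, Complex.natCast_log]

lemma logMul_iterate_one (j : ℕ) :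
    logMul^[j] 1 = fun n : ℕ => ((Real.log n ^ j : ℝ) : ℂ) := by
  induction j with
  | zero => ext; simp
  | succ j ih => simp only [Function.iterate_succ_apply', ih, logMul_ofReal, pow_succ']

/-- `logZeta j k = ∑ (log n)ʲ / nᵏ`, which is `(-1)ʲ ζ⁽ʲ⁾(k)` for `1 < k`. -/
noncomputable def logZeta (j k : ℕ) : ℝ :=
  ∑' n : ℕ, Real.log n ^ j / (n : ℝ) ^ k

lemma LSeries_logMul_iterate_one (j : ℕ) {k : ℕ} (hk : k ≠ 0) :
    L (logMul^[j] 1) k = logZeta j k := by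
  rw [logMul_iterate_one, LSeries_ofReal_natCast _ hk, logZeta]

lemma summable_log_pow_div_pow (j : ℕ) {k : ℕ} (hk : 1 < k) :
    Summable fun n : ℕ => Real.log n ^ j / (n : ℝ) ^ k := by
  rw [← LSeriesSummable_ofReal_natCast_iff (by omega), ← logMul_iterate_one]
  refine LSeriesSummable_of_abscissaOfAbsConv_lt_re ?_
  rw [absicssaOfAbsConv_logPowMul, abscissaOfAbsConv_one]
  exact_mod_cast hk

lemma tsum_log_mul_vonMangoldt_div_pow {k : ℕ} (hk : 1 < k) :
    ∑' n : ℕ, Real.log n * Λ n / (n : ℝ) ^ k =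
      logZeta 2 k / logZeta 0 k - (logZeta 1 k / logZeta 0 k) ^ 2 := by
  have hk₀ : k ≠ 0 := by omega
  have h := LSeries_logMul_vonMangoldt (s := k) (by simpa using hk)
  rw [logMul_ofReal, LSeries_ofReal_natCast _ hk₀, LSeries_logMul_iterate_one 2 hk₀,
    show L (logMul 1) k = _ from LSeries_logMul_iterate_one 1 hk₀,
    show L 1 k = _ from LSeries_logMul_iterate_one 0 hk₀] at h
  exact_mod_cast h

lemma summable_log_mul_vonMangoldt_div_pow {k : ℕ} (hk : 1 < k) :
    Summable fun n : ℕ => Real.log n * Λ n / (n : ℝ) ^ k := by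
  refine .of_nonneg_of_le (fun n => ?_) (fun n => ?_) (summable_log_pow_div_pow 2 hk)
  · exact div_nonneg (mul_nonneg (Real.log_natCast_nonneg n) vonMangoldt_nonneg) (by positivity)
  · have := Real.log_natCast_nonneg n
    rw [sq]
    gcongr
    exact vonMangoldt_le_log

lemma summable_vonMangoldt_sq_div_pow {k : ℕ} (hk : 1 < k) :
    Summable fun n : ℕ => Λ n ^ 2 / (n : ℝ) ^ k := by
  refine .of_nonneg_of_le (fun n => by positivity) (fun n => ?_) (summable_log_pow_div_pow 2 hk)
  have := vonMangoldt_nonneg (n := n)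
  gcongr
  exact vonMangoldt_le_log

lemma vonMangoldt_mul_log_sub_apply_prime_pow {p : ℕ} (hp : p.Prime) (j : ℕ) :
    Λ (p ^ (j + 1)) * (Real.log ↑(p ^ (j + 1)) - Λ (p ^ (j + 1))) = j * Real.log p ^ 2 := by
  rw [vonMangoldt_apply_pow j.succ_ne_zero, vonMangoldt_apply_prime hp, Nat.cast_pow, Real.log_pow]
  push_cast
  ring

lemma hasSum_natCast_div_pow_succ {𝕜 : Type*} [NormedField 𝕜] [HasSummableGeomSeries 𝕜] {x : 𝕜}
    (hx : 1 < ‖x‖) : HasSum (fun j : ℕ => (j : 𝕜) / x ^ (j + 1)) (1 / (x - 1) ^ 2) := by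
  have hx₀ : x ≠ 0 := norm_pos_iff.1 (one_pos.trans hx)
  have hx₁ : x - 1 ≠ 0 := sub_ne_zero.2 fun h => by simp [h] at hx
  have h := (hasSum_coe_mul_geometric_of_norm_lt_one (r := x⁻¹)
    (by rw [norm_inv]; exact inv_lt_one_of_one_lt₀ hx)).div_const x
  have hval : x⁻¹ / (1 - x⁻¹) ^ 2 / x = 1 / (x - 1) ^ 2 := by
    rw [show 1 - x⁻¹ = (x - 1) / x by field_simp]
    field_simp
  rw [hval] at h
  refine h.congr_fun fun j => ?_
  rw [pow_succ, inv_pow]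
  field_simp

lemma tsum_vonMangoldt_mul_log_sub_div_pow_prime_pow {p : ℕ} (hp : p.Prime) {k : ℕ} (hk : k ≠ 0) :
    ∑' j : ℕ, Λ (p ^ (j + 1)) * (Real.log ↑(p ^ (j + 1)) - Λ (p ^ (j + 1))) /
      (↑(p ^ (j + 1)) : ℝ) ^ k = (Real.log p / ((p : ℝ) ^ k - 1)) ^ 2 := by
  have hpk : 1 < ‖(p : ℝ) ^ k‖ := by
    rw [Real.norm_of_nonneg (by positivity)]
    exact one_lt_pow₀ (mod_cast hp.one_lt) hk
  calc
    _ = ∑' j : ℕ, Real.log p ^ 2 * (j / ((p : ℝ) ^ k) ^ (j + 1)) := by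
      refine tsum_congr fun j => ?_
      rw [vonMangoldt_mul_log_sub_apply_prime_pow hp, Nat.cast_pow, pow_right_comm]
      ring
    _ = _ := by
      rw [tsum_mul_left, (hasSum_natCast_div_pow_succ hpk).tsum_eq, mul_one_div, div_pow]

lemma summable_vonMangoldt_mul_log_sub_div_pow {k : ℕ} (hk : 1 < k) :
    Summable fun n : ℕ => Λ n * (Real.log n - Λ n) / (n : ℝ) ^ k :=
  ((summable_log_mul_vonMangoldt_div_pow hk).sub (summable_vonMangoldt_sq_div_pow hk)).congr
    fun n => by ring

lemma tsum_vonMangoldt_mul_log_sub_div_pow {k : ℕ} (hk : 1 < k) :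
    ∑' n : ℕ, Λ n * (Real.log n - Λ n) / (n : ℝ) ^ k =
      ∑' p : Nat.Primes, (Real.log p / ((p : ℝ) ^ k - 1)) ^ 2 := by
  rw [tsum_eq_tsum_primes_of_support_subset_prime_powers
    (summable_vonMangoldt_mul_log_sub_div_pow hk)]
  · exact tsum_congr fun p =>
      tsum_vonMangoldt_mul_log_sub_div_pow_prime_pow p.2 (one_pos.trans hk).ne'
  · intro n hn
    exact vonMangoldt_ne_zero_iff.1 fun h => hn (by simp [h])

lemma summable_primes_log_div_pow_sub_one_sq {k : ℕ} (hk : 1 < k) :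
    Summable fun p : Nat.Primes => (Real.log p / ((p : ℝ) ^ k - 1)) ^ 2 := by
  have h := ((summable_vonMangoldt_mul_log_sub_div_pow hk).comp_injective
    (Subtype.val_injective.comp Nat.Primes.prodNatEquiv.injective)).prod
  exact h.congr fun p =>
    tsum_vonMangoldt_mul_log_sub_div_pow_prime_pow p.2 (one_pos.trans hk).ne'

theorem tsum_vonMangoldt_sq_div_pow {k : ℕ} (hk : 1 < k) :
    ∑' n : ℕ, Λ n ^ 2 / (n : ℝ) ^ k =
      logZeta 2 k / logZeta 0 k - (logZeta 1 k / logZeta 0 k) ^ 2 -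
        ∑' p : Nat.Primes, (Real.log p / ((p : ℝ) ^ k - 1)) ^ 2 := by
  rw [← tsum_log_mul_vonMangoldt_div_pow hk, ← tsum_vonMangoldt_mul_log_sub_div_pow hk,
    ← (summable_log_mul_vonMangoldt_div_pow hk).tsum_sub
      (summable_vonMangoldt_mul_log_sub_div_pow hk)]
  exact tsum_congr fun n => by ring

lemma sum_le_tsum_subtype {ι : Type*} {p : ι → Prop} {f : ι → ℝ}
    (hf : ∀ i, p i → 0 ≤ f i) (hs : Summable fun i : Subtype p => f i) {s : Finset ι}
    (hp : ∀ i ∈ s, p i) : ∑ i ∈ s, f i ≤ ∑' i : Subtype p, f i := by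
  classical
  rw [← Finset.sum_subtype_of_mem f hp]
  exact hs.sum_le_tsum _ fun i _ => hf i i.2

lemma tsum_le_sum_range_add {f G : ℕ → ℝ} {N : ℕ} (hf : Summable f)
    (hG : Tendsto G atTop (𝓝 0)) (h : ∀ n, N ≤ n → f n ≤ G n - G (n + 1)) :
    ∑' n, f n ≤ ∑ n ∈ Finset.range N, f n + G N := by
  have hpartial : ∀ M, N ≤ M →
      ∑ n ∈ Finset.range M, f n ≤ ∑ n ∈ Finset.range N, f n + (G N - G M) := by
    intro M hM
    induction M, hM using Nat.le_induction with
    | base => simp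
    | succ M hM ih =>
      rw [Finset.sum_range_succ]
      linarith [h M hM]
  have hlim := (hG.const_sub (G N)).const_add (∑ n ∈ Finset.range N, f n)
  rw [sub_zero] at hlim
  exact le_of_tendsto_of_tendsto hf.hasSum.tendsto_sum_nat hlim
    ((eventually_ge_atTop N).mono hpartial)

lemma sum_range_add_le_tsum {f G : ℕ → ℝ} {N : ℕ} (hf : Summable f)
    (hG : Tendsto G atTop (𝓝 0)) (h : ∀ n, N ≤ n → G n - G (n + 1) ≤ f n) :
    ∑ n ∈ Finset.range N, f n + G N ≤ ∑' n, f n := by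
  have := tsum_le_sum_range_add (f := -f) (G := -G) (N := N) hf.neg
    (by simpa only [neg_zero] using! hG.neg)
    fun n hn => by simpa [neg_add_eq_sub] using neg_le_neg (h n hn)
  simp only [Pi.neg_apply, tsum_neg, Finset.sum_neg_distrib] at this
  linarith

lemma log_one_add_div_one_sub_inv_two_mul_add_one {x : ℝ} (hx : 0 < x) :
    Real.log ((1 + 1 / (2 * x + 1)) / (1 - 1 / (2 * x + 1))) = Real.log (x + 1) - Real.log x := by
  rw [← Real.log_div (by positivity) (by positivity)]
  congr 1
  rw [show 1 - 1 / (2 * x + 1) = 2 * x / (2 * x + 1) by field_simp; ring]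
  field_simp
  ring

lemma two_mul_sum_range_le_log_add_one_sub_log {x : ℝ} (hx : 0 < x) (K : ℕ) :
    2 * ∑ i ∈ Finset.range K, (1 / (2 * x + 1)) ^ (2 * i + 1) / (2 * i + 1) ≤
      Real.log (x + 1) - Real.log x := by
  have h := Real.sum_range_le_log_div (x := 1 / (2 * x + 1)) (by positivity)
    (by rw [div_lt_one] <;> linarith) K
  rw [log_one_add_div_one_sub_inv_two_mul_add_one hx] at h
  linarith

lemma log_add_one_sub_log_le_two_mul_sum_range_add {x : ℝ} (hx : 0 < x) (K : ℕ) :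
    Real.log (x + 1) - Real.log x ≤
      2 * (∑ i ∈ Finset.range K, (1 / (2 * x + 1)) ^ (2 * i + 1) / (2 * i + 1) +
        (1 / (2 * x + 1)) ^ (2 * K + 1) / (1 - (1 / (2 * x + 1)) ^ 2)) := by
  have h := Real.log_div_le_sum_range_add (x := 1 / (2 * x + 1)) (by positivity)
    (by rw [div_lt_one] <;> linarith) K
  rw [log_one_add_div_one_sub_inv_two_mul_add_one hx] at h
  linarith

lemma two_div_le_log_add_one_sub_log {x : ℝ} (hx : 0 < x) :
    2 / (2 * x + 1) ≤ Real.log (x + 1) - Real.log x := by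
  simpa [div_eq_mul_inv] using two_mul_sum_range_le_log_add_one_sub_log hx 1

lemma log_add_one_sub_log_le_div {x : ℝ} (hx : 0 < x) :
    Real.log (x + 1) - Real.log x ≤ (2 * x + 1) / (2 * x * (x + 1)) := by
  refine (log_add_one_sub_log_le_two_mul_sum_range_add hx 0).trans_eq ?_
  rw [show 1 - (1 / (2 * x + 1)) ^ 2 = 4 * x * (x + 1) / (2 * x + 1) ^ 2 by field_simp; ring]
  rw [Finset.sum_range_zero, zero_add, mul_zero, zero_add, pow_one]
  field_simp
  norm_num

/-- A lower bound, for `e ≤ x`, of `∑_{m ≥ 0} log (x + m) / (x + m) ^ 2`: the integral of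
`log t / t ^ 2` over `[x, ∞)` plus half of the first term, as in the trapezoidal rule. -/
noncomputable def logTailLower (x : ℝ) : ℝ :=
  (Real.log x + 1) / x + Real.log x / (2 * x ^ 2)

/-- An upper bound, for `exp √2 ≤ x`, of `∑_{m ≥ 0} (log (x + m) / (x + m)) ^ 2`: the integral
`(log x ^ 2 + 2 * log x + 2) / x` of `(log t / t) ^ 2` over `[x, ∞)`, with the coefficient `1 / x`
of `log x ^ 2` raised to `1 / (x - 1 / 2)`. This adds slightly more than half of the first term, so
that the decrease from `x` to `x + 1` is at least the term at `x`. -/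
noncomputable def logSqTailUpper (x : ℝ) : ℝ :=
  2 * Real.log x ^ 2 / (2 * x - 1) + (2 * Real.log x + 2) / x

lemma logTailLower_sub_le {x : ℝ} (hx : Real.exp 1 ≤ x) :
    logTailLower x - logTailLower (x + 1) ≤ Real.log x / x ^ 2 := by
  have hx₀ : 0 < x := (Real.exp_pos 1).trans_le hx
  have hlog : 1 ≤ Real.log x := (Real.le_log_iff_exp_le hx₀).2 hx
  have hincr := two_div_le_log_add_one_sub_log hx₀
  set l := Real.log x
  set d := 2 / (2 * x + 1) with hd
  have hnext : (l + d + 1) / (x + 1) + (l + d) / (2 * (x + 1) ^ 2) ≤ logTailLower (x + 1) := by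
    unfold logTailLower
    gcongr <;> linarith
  have hexcess : 0 ≤ (l * (2 * x + 1) - 2 * x) / (2 * x ^ 2 * (x + 1) ^ 2 * (2 * x + 1)) :=
    div_nonneg (by nlinarith) (by positivity)
  calc
    logTailLower x - logTailLower (x + 1)
      ≤ (l + 1) / x + l / (2 * x ^ 2) -
          ((l + d + 1) / (x + 1) + (l + d) / (2 * (x + 1) ^ 2)) := sub_le_sub_left hnext _
    _ = l / x ^ 2 - (l * (2 * x + 1) - 2 * x) / (2 * x ^ 2 * (x + 1) ^ 2 * (2 * x + 1)) := by
      rw [hd]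
      field_simp
      ring
    _ ≤ l / x ^ 2 := sub_le_self _ hexcess

lemma log_sq_div_sq_le {x : ℝ} (hx : Real.exp √2 ≤ x) :
    Real.log x ^ 2 / x ^ 2 ≤ logSqTailUpper x - logSqTailUpper (x + 1) := by
  have hx₁ : 1 < x := (Real.one_lt_exp_iff.2 (by positivity)).trans_le hx
  have hx₀ : 0 < x := one_pos.trans hx₁
  have hlog : √2 ≤ Real.log x := (Real.le_log_iff_exp_le hx₀).2 hx
  have hlog_nonneg : 0 ≤ Real.log (x + 1) := Real.log_nonneg (by linarith)
  have hlog_sq : 2 ≤ Real.log x ^ 2 := (Real.sqrt_le_left ((Real.sqrt_nonneg 2).trans hlog)).1 hlog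
  have hincr := log_add_one_sub_log_le_div hx₀
  have hden : 0 < 2 * x - 1 := by linarith
  set l := Real.log x
  set d := (2 * x + 1) / (2 * x * (x + 1)) with hd
  have hnext : logSqTailUpper (x + 1) ≤
      2 * (l + d) ^ 2 / (2 * x + 1) + (2 * (l + d) + 2) / (x + 1) := by
    rw [logSqTailUpper, show 2 * (x + 1) - 1 = 2 * x + 1 by ring]
    gcongr <;> linarith
  have hexcess : 0 ≤ (2 * (x + 1) ^ 2 * l ^ 2 - (4 * x ^ 2 - 1)) /
      (2 * x ^ 2 * (x + 1) ^ 2 * ((2 * x - 1) * (2 * x + 1))) :=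
    div_nonneg (by nlinarith [mul_le_mul_of_nonneg_left hlog_sq (sq_nonneg (x + 1))])
      (by positivity)
  have hdiff : 2 * l ^ 2 / (2 * x - 1) + (2 * l + 2) / x -
        (2 * (l + d) ^ 2 / (2 * x + 1) + (2 * (l + d) + 2) / (x + 1)) - l ^ 2 / x ^ 2 =
      (2 * (x + 1) ^ 2 * l ^ 2 - (4 * x ^ 2 - 1)) /
        (2 * x ^ 2 * (x + 1) ^ 2 * ((2 * x - 1) * (2 * x + 1))) := by
    rw [hd]
    field_simp
    ring
  calc
    l ^ 2 / x ^ 2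
      ≤ 2 * l ^ 2 / (2 * x - 1) + (2 * l + 2) / x -
          (2 * (l + d) ^ 2 / (2 * x + 1) + (2 * (l + d) + 2) / (x + 1)) :=
      sub_nonneg.1 (hdiff ▸ hexcess)
    _ ≤ logSqTailUpper x - logSqTailUpper (x + 1) := sub_le_sub_left hnext _

lemma tendsto_logTailLower : Tendsto logTailLower atTop (𝓝 0) := by
  have h₀ := Real.tendsto_pow_log_div_mul_add_atTop 1 0 0 one_ne_zero
  have h₁ := Real.tendsto_pow_log_div_mul_add_atTop 1 0 1 one_ne_zero
  have h := (h₁.add h₀).add ((h₁.mul h₀).div_const 2)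
  simp only [add_zero, mul_zero, zero_div] at h
  refine h.congr fun x => ?_
  rw [logTailLower]
  ring

lemma tendsto_logSqTailUpper : Tendsto logSqTailUpper atTop (𝓝 0) := by
  have h₀ := Real.tendsto_pow_log_div_mul_add_atTop 1 0 0 one_ne_zero
  have h₁ := Real.tendsto_pow_log_div_mul_add_atTop 1 0 1 one_ne_zero
  have h₂ := Real.tendsto_pow_log_div_mul_add_atTop 2 (-1) 2 two_ne_zero
  have h := (h₂.const_mul 2).add ((h₁.add h₀).const_mul 2)
  simp only [add_zero, mul_zero] at h
  refine h.congr fun x => ?_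
  rw [logSqTailUpper]
  ring

lemma sum_range_add_logTailLower_le_logZeta {N : ℕ} (hN : Real.exp 1 ≤ N) :
    ∑ n ∈ Finset.range N, Real.log n / (n : ℝ) ^ 2 + logTailLower N ≤ logZeta 1 2 := by
  simp only [logZeta, pow_one]
  refine sum_range_add_le_tsum (G := fun n => logTailLower n)
    (by simpa using summable_log_pow_div_pow 1 one_lt_two)
    (tendsto_logTailLower.comp tendsto_natCast_atTop_atTop) fun n hn => ?_
  push_cast
  exact logTailLower_sub_le (hN.trans (mod_cast hn))

lemma logZeta_le_sum_range_add_logSqTailUpper {N : ℕ} (hN : Real.exp √2 ≤ N) :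
    logZeta 2 2 ≤ ∑ n ∈ Finset.range N, Real.log n ^ 2 / (n : ℝ) ^ 2 + logSqTailUpper N := by
  refine tsum_le_sum_range_add (G := fun n => logSqTailUpper n)
    (summable_log_pow_div_pow 2 one_lt_two)
    (tendsto_logSqTailUpper.comp tendsto_natCast_atTop_atTop) fun n hn => ?_
  push_cast
  exact log_sq_div_sq_le (hN.trans (mod_cast hn))

/-- A rational lower bound for `log n`: the sum over `1 ≤ m < n` of the first `K` terms of the
series `log (m + 1) - log m = 2 * artanh (1 / (2 * m + 1))`. -/
def logLower (K n : ℕ) : ℚ :=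
  ∑ m ∈ Finset.Ico 1 n,
    2 * ∑ i ∈ Finset.range K, (1 / (2 * m + 1) : ℚ) ^ (2 * i + 1) / (2 * i + 1)

/-- A rational upper bound for `log n`: each truncated series of `logLower K n` is completed by a
geometric bound for its remainder. -/
def logUpper (K n : ℕ) : ℚ :=
  ∑ m ∈ Finset.Ico 1 n,
    2 * (∑ i ∈ Finset.range K, (1 / (2 * m + 1) : ℚ) ^ (2 * i + 1) / (2 * i + 1) +
      (1 / (2 * m + 1)) ^ (2 * K + 1) / (1 - (1 / (2 * m + 1)) ^ 2))

lemma sum_Ico_log_add_one_sub_log (n : ℕ) :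
    ∑ m ∈ Finset.Ico 1 n, (Real.log (m + 1) - Real.log m) = Real.log n := by
  rcases n.eq_zero_or_pos with rfl | hn
  · simp
  · simpa using Finset.sum_Ico_sub (fun m : ℕ => Real.log m) hn

lemma logLower_le_log (K n : ℕ) : logLower K n ≤ Real.log n := by
  rw [← sum_Ico_log_add_one_sub_log, logLower]
  push_cast
  exact Finset.sum_le_sum fun m hm => two_mul_sum_range_le_log_add_one_sub_log
    (mod_cast (Finset.mem_Ico.1 hm).1) K

lemma log_le_logUpper (K n : ℕ) : Real.log n ≤ logUpper K n := by
  rw [← sum_Ico_log_add_one_sub_log, logUpper]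
  push_cast
  exact Finset.sum_le_sum fun m hm => log_add_one_sub_log_le_two_mul_sum_range_add
    (mod_cast (Finset.mem_Ico.1 hm).1) K

lemma logLower_nonneg (K n : ℕ) : 0 ≤ logLower K n := by
  unfold logLower
  positivity

lemma le_logZeta_one_two : 0.93754 ≤ logZeta 1 2 :=
  calc
    (0.93754 : ℝ) = (0.93754 : ℚ) := by norm_num
    _ ≤ (∑ n ∈ Finset.range 50, logLower 7 n / n ^ 2 +
          ((logLower 7 50 + 1) / 50 + logLower 7 50 / (2 * 50 ^ 2)) : ℚ) :=
      Rat.cast_le.2 (by decide +kernel)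
    _ ≤ ∑ n ∈ Finset.range 50, Real.log n / (n : ℝ) ^ 2 + logTailLower (50 : ℕ) := by
      rw [logTailLower]
      push_cast
      gcongr <;> exact mod_cast logLower_le_log 7 _
    _ ≤ logZeta 1 2 := sum_range_add_logTailLower_le_logZeta
      (Real.exp_one_lt_three.le.trans (by norm_num))

lemma exp_sqrt_two_lt_nine : Real.exp √2 < 9 :=
  calc
    Real.exp √2 < Real.exp (1 + 1) :=
      Real.exp_lt_exp.2 ((Real.sqrt_lt' (by norm_num)).2 (by norm_num))
    _ < 3 * 3 := by rw [Real.exp_add]; gcongr <;> exact Real.exp_one_lt_three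
    _ = 9 := by norm_num

lemma logZeta_two_two_le : logZeta 2 2 ≤ 1.9893 :=
  calc
    logZeta 2 2
      ≤ ∑ n ∈ Finset.range 50, Real.log n ^ 2 / (n : ℝ) ^ 2 + logSqTailUpper (50 : ℕ) :=
      logZeta_le_sum_range_add_logSqTailUpper (exp_sqrt_two_lt_nine.le.trans (by norm_num))
    _ ≤ (∑ n ∈ Finset.range 50, logUpper 7 n ^ 2 / n ^ 2 +
          (2 * logUpper 7 50 ^ 2 / (2 * 50 - 1) + (2 * logUpper 7 50 + 2) / 50) : ℚ) := by
      rw [logSqTailUpper]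
      push_cast
      have : (0 : ℝ) ≤ 2 * 50 - 1 := by norm_num
      gcongr <;> exact mod_cast log_le_logUpper 7 _
    _ ≤ (1.9893 : ℚ) := Rat.cast_le.2 (by decide +kernel)
    _ = 1.9893 := by norm_num

lemma le_tsum_primes_log_div_sq_sub_one_sq :
    0.07924 ≤ ∑' p : Nat.Primes, (Real.log p / ((p : ℝ) ^ 2 - 1)) ^ 2 :=
  calc
    (0.07924 : ℝ) = (0.07924 : ℚ) := by norm_num
    _ ≤ (∑ p ∈ Nat.primesBelow 32, (logLower 7 p / (p ^ 2 - 1)) ^ 2 : ℚ) :=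
      Rat.cast_le.2 (by decide +kernel)
    _ ≤ ∑ p ∈ Nat.primesBelow 32, (Real.log p / ((p : ℝ) ^ 2 - 1)) ^ 2 := by
      push_cast
      refine Finset.sum_le_sum fun p hp => ?_
      have hden : 0 < (p : ℝ) ^ 2 - 1 :=
        sub_pos.2 (one_lt_pow₀ (mod_cast Nat.one_lt_of_mem_primesBelow hp) two_ne_zero)
      have hlower : 0 ≤ (logLower 7 p : ℝ) := mod_cast logLower_nonneg 7 p
      gcongr
      exact logLower_le_log 7 p
    _ ≤ ∑' p : Nat.Primes, (Real.log p / ((p : ℝ) ^ 2 - 1)) ^ 2 :=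
      sum_le_tsum_subtype (f := fun p : ℕ => (Real.log p / ((p : ℝ) ^ 2 - 1)) ^ 2)
        (fun p _ => sq_nonneg _) (summable_primes_log_div_pow_sub_one_sq (k := 2) one_lt_two)
        fun p => Nat.prime_of_mem_primesBelow

lemma logZeta_zero_two : logZeta 0 2 = Real.pi ^ 2 / 6 := by
  simpa [logZeta] using hasSum_zeta_two.tsum_eq

/-- The sum `∑_{n≥1} Λ(n)²/n²` converges and is `< 0.8053`. -/
theorem sum_vonMangoldt_sq_div_sq_lt :
    Summable (fun n : ℕ => Λ n ^ 2 / (n : ℝ) ^ 2) ∧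
    ∑' n : ℕ, Λ n ^ 2 / (n : ℝ) ^ 2 < 0.8053 := by
  refine ⟨summable_vonMangoldt_sq_div_pow one_lt_two, ?_⟩
  rw [tsum_vonMangoldt_sq_div_pow one_lt_two, logZeta_zero_two]
  have hπ_lower := Real.pi_gt_d6.le
  have hπ_upper := Real.pi_lt_d6.le
  calc
    logZeta 2 2 / (Real.pi ^ 2 / 6) - (logZeta 1 2 / (Real.pi ^ 2 / 6)) ^ 2 -
        ∑' p : Nat.Primes, (Real.log p / ((p : ℝ) ^ 2 - 1)) ^ 2
      ≤ 1.9893 / (3.141592 ^ 2 / 6) - (0.93754 / (3.141593 ^ 2 / 6)) ^ 2 - 0.07924 := by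
      have hQ := logZeta_two_two_le
      have hL := le_logZeta_one_two
      have hP := le_tsum_primes_log_div_sq_sub_one_sq
      gcongr
    _ < 0.8053 := by norm_num
end

section
/- The sum over all primes p of (log p)²/(p² − p) converges and is strictly less than 0.982. -/
/-!
Differentiating `-ζ' / ζ = ∑ n, Λ n / n ^ s` gives
`∑ n, Λ n * log n / n ^ s = ζ'' / ζ - (ζ' / ζ) ^ 2`. At `s = 2`, grouping the powers of each prime
turns the left-hand side into `∑ p, (log p) ^ 2 * p ^ 2 / (p ^ 2 - 1) ^ 2`, whose terms differ from
`(log p) ^ 2 / (p ^ 2 - p)` by a remainder of order `(log p) ^ 2 / p ^ 3`. The given series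
converges too slowly for its sum over primes to be estimated term by term, but comparison with
integrals gives the tails of `ζ'` and `ζ''` at `2` up to the size of a single term, and the
remainder series converges fast, so that 2000 terms of each are enough.
-/

open Finset Set MeasureTheory Filter LSeries
open scoped Topology LSeries.notation Nat ArithmeticFunction.vonMangoldt

/-! ### The logarithmic derivative of zeta and prime powers -/

/-- The Dirichlet series `∑ n, (log n) ^ j / n ^ k = (-1) ^ j * ζ⁽ʲ⁾(k)`. For `k ≠ 0` its term at
`n = 0` vanishes, being a division by `0`. -/
noncomputable def logPowZeta (j k : ℕ) : ℝ := ∑' n : ℕ, Real.log n ^ j / (n : ℝ) ^ k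

lemma LSeries_term_ofReal (f : ℕ → ℝ) {k : ℕ} (hk : k ≠ 0) :
    term (fun n ↦ (f n : ℂ)) k = fun n ↦ ((f n / (n : ℝ) ^ k : ℝ) : ℂ) := by
  ext n
  rcases eq_or_ne n 0 with rfl | hn
  · simp [hk]
  · simp [term_of_ne_zero hn]

lemma iterate_logMul_one (j : ℕ) :
    logMul^[j] 1 = fun n : ℕ ↦ ((Real.log n ^ j : ℝ) : ℂ) := by
  induction j with
  | zero => ext; simp
  | succ j ih =>
    ext n
    simp only [Function.iterate_succ_apply', ih, logMul, Complex.ofReal_mul, Complex.ofReal_pow,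
      Complex.natCast_log, pow_succ']

lemma LSeriesHasSum_iterate_logMul_one (j : ℕ) {k : ℕ} (hk : 1 < k) :
    LSeriesHasSum (logMul^[j] 1) k (logPowZeta j k) := by
  have hconv : abscissaOfAbsConv (logMul^[j] 1) < (k : ℂ).re := by
    rw [absicssaOfAbsConv_logPowMul, abscissaOfAbsConv_one, Complex.natCast_re]
    exact_mod_cast hk
  have hsum := LSeriesSummable_of_abscissaOfAbsConv_lt_re hconv
  rw [LSeriesSummable, iterate_logMul_one, LSeries_term_ofReal _ (by lia),
    Complex.summable_ofReal] at hsum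
  rw [LSeriesHasSum, iterate_logMul_one, LSeries_term_ofReal _ (by lia), Complex.hasSum_ofReal]
  exact hsum.hasSum

lemma hasSum_log_pow_div_pow (j : ℕ) {k : ℕ} (hk : 1 < k) :
    HasSum (fun n : ℕ ↦ Real.log n ^ j / (n : ℝ) ^ k) (logPowZeta j k) := by
  simpa only [LSeriesHasSum, iterate_logMul_one, LSeries_term_ofReal _ (by lia : k ≠ 0),
    Complex.hasSum_ofReal] using LSeriesHasSum_iterate_logMul_one j hk

lemma logPowZeta_zero_two : logPowZeta 0 2 = Real.pi ^ 2 / 6 := by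
  simpa only [logPowZeta, pow_zero] using hasSum_zeta_two.tsum_eq

lemma LSeriesHasSum_logMul_vonMangoldt {s : ℂ} (hs : 1 < s.re) :
    LSeriesHasSum (logMul ↗Λ) s (L (logMul^[2] 1) s / L 1 s - (L (logMul 1) s / L 1 s) ^ 2) := by
  have hconv {z : ℂ} (hz : 1 < z.re) : abscissaOfAbsConv 1 < z.re := by
    rw [abscissaOfAbsConv_one]; exact_mod_cast hz
  have hΛ : abscissaOfAbsConv ↗Λ < s.re :=
    (abscissaOfAbsConv_le_of_forall_lt_LSeriesSummable fun y hy ↦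
      ArithmeticFunction.LSeriesSummable_vonMangoldt (by simpa using hy)).trans_lt
      (by exact_mod_cast hs)
  have heq : L ↗Λ =ᶠ[𝓝 s] fun z ↦ L (logMul 1) z / L 1 z := by
    filter_upwards [(isOpen_lt continuous_const Complex.continuous_re).mem_nhds hs] with z hz
    rw [ArithmeticFunction.LSeries_vonMangoldt_eq hz, LSeries_deriv (hconv hz), neg_neg]
  have h0 : L 1 s ≠ 0 := LSeries_one_ne_zero_of_one_lt_re hs
  have hnum : HasDerivAt (L (logMul 1)) (-L (logMul^[2] 1) s) s :=
    LSeries_hasDerivAt (by rw [abscissaOfAbsConv_logMul]; exact hconv hs)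
  have hderiv := heq.deriv_eq.trans (hnum.div (LSeries_hasDerivAt (hconv hs)) h0).deriv
  rw [LSeries_deriv hΛ, neg_eq_iff_eq_neg] at hderiv
  convert (LSeriesSummable_logMul_of_lt_re hΛ).LSeriesHasSum using 1
  rw [hderiv]
  field_simp
  ring

lemma hasSum_vonMangoldt_mul_log_div_pow {k : ℕ} (hk : 1 < k) :
    HasSum (fun n : ℕ ↦ Real.log n * Λ n / (n : ℝ) ^ k)
      (logPowZeta 2 k / logPowZeta 0 k - (logPowZeta 1 k / logPowZeta 0 k) ^ 2) := by
  have h := LSeriesHasSum_logMul_vonMangoldt (s := k) (by simpa using hk)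
  have hL (j : ℕ) := (LSeriesHasSum_iterate_logMul_one j hk).LSeries_eq
  have hL0 : L 1 k = logPowZeta 0 k := hL 0
  have hL1 : L (logMul 1) k = logPowZeta 1 k := hL 1
  have hlogΛ : logMul ↗Λ = fun n : ℕ ↦ ((Real.log n * Λ n : ℝ) : ℂ) := by
    ext n
    simp only [logMul, Complex.ofReal_mul, Complex.natCast_log]
  rw [hL0, hL1, hL 2, hlogΛ, LSeriesHasSum, LSeries_term_ofReal _ (by lia)] at h
  exact_mod_cast h

lemma hasSum_primes_of_hasSum_isPrimePow {M : Type*} [AddCommMonoid M] [TopologicalSpace M]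
    [ContinuousAdd M] [RegularSpace M] {f : ℕ → M} {g : Nat.Primes → M} {a : M}
    (hf : HasSum f a) (hsupp : ∀ n, ¬ IsPrimePow n → f n = 0)
    (hg : ∀ p : Nat.Primes, HasSum (fun k : ℕ ↦ f (p ^ (k + 1))) (g p)) : HasSum g a := by
  have hsub : HasSum (f ∘ ((↑) : {n : ℕ | IsPrimePow n} → ℕ)) a :=
    (hasSum_subtype_iff_of_support_subset fun n hn ↦ not_not.mp fun h ↦ hn (hsupp n h)).mpr hf
  refine HasSum.prod_fiberwise ((Nat.Primes.prodNatEquiv.hasSum_iff).mpr hsub) fun p ↦ ?_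
  simpa only [Function.comp_def, Nat.Primes.coe_prodNatEquiv_apply] using hg p

lemma hasSum_succ_mul_geometric {𝕜 : Type*} [NormedField 𝕜] [CompleteSpace 𝕜] {r : 𝕜}
    (hr : ‖r‖ < 1) :
    HasSum (fun k : ℕ ↦ ((k + 1 : ℕ) : 𝕜) * r ^ (k + 1)) (r / (1 - r) ^ 2) := by
  refine (hasSum_nat_add_iff (f := fun n : ℕ ↦ (n : 𝕜) * r ^ n) 1).mpr ?_
  simpa using hasSum_coe_mul_geometric_of_norm_lt_one hr

lemma hasSum_primes_log_sq_mul {k : ℕ} (hk : 1 < k) :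
    HasSum (fun p : Nat.Primes ↦ Real.log p ^ 2 * ((p : ℝ) ^ k / ((p : ℝ) ^ k - 1) ^ 2))
      (logPowZeta 2 k / logPowZeta 0 k - (logPowZeta 1 k / logPowZeta 0 k) ^ 2) := by
  refine hasSum_primes_of_hasSum_isPrimePow (hasSum_vonMangoldt_mul_log_div_pow hk)
    (fun n hn ↦ ?_) fun p ↦ ?_
  · rw [ArithmeticFunction.vonMangoldt_eq_zero_iff.mpr hn, mul_zero, zero_div]
  · have hp : (1 : ℝ) < (p : ℝ) ^ k := one_lt_pow₀ (mod_cast p.prop.one_lt) (by lia)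
    have hr : ‖((p : ℝ) ^ k)⁻¹‖ < 1 := by
      rw [Real.norm_of_nonneg (by positivity)]
      exact inv_lt_one_of_one_lt₀ hp
    have hterm (m : ℕ) :
        Real.log (p ^ (m + 1) : ℕ) * Λ (p ^ (m + 1)) / ((p ^ (m + 1) : ℕ) : ℝ) ^ k =
          Real.log p ^ 2 * ((m + 1 : ℕ) * (((p : ℝ) ^ k)⁻¹) ^ (m + 1)) := by
      rw [ArithmeticFunction.vonMangoldt_apply_pow m.succ_ne_zero,
        ArithmeticFunction.vonMangoldt_apply_prime p.prop, Nat.cast_pow, Real.log_pow, inv_pow,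
        ← pow_mul, ← pow_mul, mul_comm k]
      ring
    have hval : (p : ℝ) ^ k / ((p : ℝ) ^ k - 1) ^ 2 =
        ((p : ℝ) ^ k)⁻¹ / (1 - ((p : ℝ) ^ k)⁻¹) ^ 2 := by
      have := sub_pos.mpr hp
      field_simp
    simp only [hterm, hval]
    exact (hasSum_succ_mul_geometric hr).mul_left (Real.log p ^ 2)

/-! ### Integral bounds for tails -/

/-- The integral `∫ t in Ioi x, (log t) ^ j / t ^ 2`, defined by the recursion in `j` that
integration by parts gives. -/
noncomputable def logPowTail : ℕ → ℝ → ℝ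
  | 0, x => 1 / x
  | j + 1, x => Real.log x ^ (j + 1) / x + (j + 1) * logPowTail j x

lemma hasDerivAt_logPowTail (j : ℕ) {x : ℝ} (hx : x ≠ 0) :
    HasDerivAt (logPowTail j) (-(Real.log x ^ j / x ^ 2)) x := by
  induction j with
  | zero =>
    simpa only [logPowTail, one_div, pow_zero] using hasDerivAt_inv hx
  | succ j ih =>
    have hdiv := ((Real.hasDerivAt_log hx).fun_pow (j + 1)).fun_div (hasDerivAt_id' x) hx
    refine (hdiv.fun_add (ih.const_mul (j + 1 : ℝ))).congr_deriv ?_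
    push_cast
    field_simp
    ring

lemma tendsto_logPowTail (j : ℕ) : Tendsto (logPowTail j) atTop (𝓝 0) := by
  induction j with
  | zero => simpa only [logPowTail, one_div] using tendsto_inv_atTop_zero
  | succ j ih =>
    have hlog := (Real.isLittleO_pow_log_id_atTop (n := j + 1)).tendsto_div_nhds_zero
    simpa [logPowTail] using! hlog.add (ih.const_mul (j + 1 : ℝ))

lemma log_pow_div_pow_nonneg (j k : ℕ) {x : ℝ} (hx : 1 ≤ x) : 0 ≤ Real.log x ^ j / x ^ k := by
  have := Real.log_nonneg hx
  positivity

lemma integrableOn_Ioi_log_pow_div_sq (j : ℕ) {a : ℝ} (ha : 1 ≤ a) :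
    IntegrableOn (fun x ↦ Real.log x ^ j / x ^ 2) (Ioi a) := by
  refine integrableOn_Ioi_deriv_of_nonneg' (fun x hx ↦ ?_)
    (fun x hx ↦ log_pow_div_pow_nonneg j 2 (ha.trans hx.le)) (tendsto_logPowTail j).neg
  simpa only [neg_neg] using
    (hasDerivAt_logPowTail j (zero_lt_one.trans_le (ha.trans hx)).ne').fun_neg

lemma integral_Ioi_log_pow_div_sq (j : ℕ) {a : ℝ} (ha : 1 ≤ a) :
    ∫ x in Ioi a, Real.log x ^ j / x ^ 2 = logPowTail j a := by
  rw [integral_Ioi_of_hasDerivAt_of_nonneg' (fun x hx ↦ ?_)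
    (fun x hx ↦ log_pow_div_pow_nonneg j 2 (ha.trans hx.le)) (tendsto_logPowTail j).neg]
  · simp
  · simpa only [neg_neg] using
      (hasDerivAt_logPowTail j (zero_lt_one.trans_le (ha.trans hx)).ne').fun_neg

lemma antitoneOn_log_pow_div_pow {j k : ℕ} (hjk : j ≤ k) :
    AntitoneOn (fun x : ℝ ↦ Real.log x ^ j / x ^ k) (Ici (Real.exp 1)) := by
  intro x hx y hy hxy
  have hx0 : 0 < x := (Real.exp_pos 1).trans_le hx
  have hy0 : 0 < y := hx0.trans_le hxy
  have hsplit (z : ℝ) : Real.log z ^ j / z ^ k = (Real.log z / z) ^ j * z⁻¹ ^ (k - j) := by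
    rw [div_pow, inv_pow, ← div_eq_mul_inv, div_div, ← pow_add, Nat.add_sub_cancel' hjk]
  have hlog : 0 ≤ Real.log y / y :=
    div_nonneg (Real.log_nonneg ((Real.one_le_exp zero_le_one).trans hy)) hy0.le
  simp only [hsplit]
  exact mul_le_mul (pow_le_pow_left₀ hlog (Real.log_div_self_antitoneOn hx hy hxy) j)
    (by gcongr) (by positivity) (pow_nonneg (hlog.trans (Real.log_div_self_antitoneOn hx hy hxy)) j)

lemma tsum_nat_add_le_logPowTail {j N : ℕ} (hj : j ≤ 2) (hN : Real.exp 1 ≤ N) :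
    ∑' n : ℕ, Real.log (n + N + 1 : ℕ) ^ j / ((n + N + 1 : ℕ) : ℝ) ^ 2 ≤ logPowTail j N := by
  have hN1 : (1 : ℝ) ≤ N := (Real.one_le_exp zero_le_one).trans hN
  rw [← integral_Ioi_log_pow_div_sq j hN1]
  exact ((antitoneOn_log_pow_div_pow hj).mono (Ici_subset_Ici.mpr hN)).tsum_comp_add_le_integral N
    (integrableOn_Ioi_log_pow_div_sq j hN1)
    (fun x hx ↦ log_pow_div_pow_nonneg j 2 (hN1.trans hx.le))

lemma logPowZeta_two_le {j N : ℕ} (hj : j ≤ 2) (hN : Real.exp 1 ≤ N) :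
    logPowZeta j 2 ≤ ∑ n ∈ range (N + 1), Real.log n ^ j / (n : ℝ) ^ 2 + logPowTail j N := by
  rw [logPowZeta,
    ← (hasSum_log_pow_div_pow j one_lt_two).summable.sum_add_tsum_nat_add (N + 1)]
  gcongr
  exact tsum_nat_add_le_logPowTail hj hN

lemma le_logPowZeta_two {j N : ℕ} (hj : j ≤ 2) (hN : Real.exp 1 ≤ N) :
    ∑ n ∈ range N, Real.log n ^ j / (n : ℝ) ^ 2 + logPowTail j N ≤ logPowZeta j 2 := by
  have hsum := (hasSum_log_pow_div_pow j one_lt_two).summable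
  have hN1 : (1 : ℝ) ≤ N := (Real.one_le_exp zero_le_one).trans hN
  rw [logPowZeta, ← hsum.sum_add_tsum_nat_add N, ← integral_Ioi_log_pow_div_sq j hN1]
  gcongr
  exact ((antitoneOn_log_pow_div_pow hj).mono (Ici_subset_Ici.mpr hN)).integral_le_tsum_comp_add N
    hsum (fun x hx ↦ log_pow_div_pow_nonneg j 2 (hN1.trans hx.le))

/-! ### Integer approximations of logarithms -/

lemma cast_sum_div_le {ι : Type*} (s : Finset ι) (a b : ι → ℕ) :
    ((∑ i ∈ s, a i / b i : ℕ) : ℝ) ≤ ∑ i ∈ s, (a i : ℝ) / b i := by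
  rw [Nat.cast_sum]
  exact sum_le_sum fun i _ ↦ Nat.cast_div_le

lemma sum_div_le_cast_add_card {ι : Type*} (s : Finset ι) (a b : ι → ℕ) :
    ∑ i ∈ s, (a i : ℝ) / b i ≤ ((∑ i ∈ s, a i / b i : ℕ) : ℝ) + #s := by
  rw [card_eq_sum_ones, Nat.cast_sum, Nat.cast_sum, ← sum_add_distrib, Nat.cast_one]
  refine sum_le_sum fun i _ ↦ ?_
  rw [← Nat.floor_div_eq_div (K := ℝ)]
  exact (Nat.lt_floor_add_one _).le

/-- The first eight terms of `10 ^ 9 * log ((1 + x) / (1 - x)) = 10 ^ 9 * ∑ i, 2 * x ^ (2 * i + 1) /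
(2 * i + 1)` at `x = m / d`, each rounded down to an integer. -/
def logRatioFloor (m d : ℕ) : ℕ :=
  ∑ i ∈ range 8, 2 * 10 ^ 9 * m ^ (2 * i + 1) / ((2 * i + 1) * d ^ (2 * i + 1))

/-- An integer approximation from below to `10 ^ 9 * log n`: if `2 ^ k ≤ n < 2 ^ (k + 1)`, then
`n = 2 ^ k * ((1 + x) / (1 - x))` for `x = (n - 2 ^ k) / (n + 2 ^ k)`, and `x < 1 / 3`. -/
def logFloor (n : ℕ) : ℕ :=
  n.log2 * 693147180 + logRatioFloor (n - 2 ^ n.log2) (n + 2 ^ n.log2)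

/-- An integer approximation from above to `10 ^ 9 * log n`: `Nat.log2 n` accounts for the rounding
of `log 2`, and `26` for the eight roundings in `logRatioFloor` and its truncation error, which is
at most `10 ^ 9 * 2 * (1 / 3) ^ 17 / (1 - (1 / 3) ^ 2) < 18`. -/
def logCeil (n : ℕ) : ℕ := logFloor n + n.log2 + 26

lemma sum_logRatio_terms (m d : ℕ) :
    ∑ i ∈ range 8, ((2 * 10 ^ 9 * m ^ (2 * i + 1) : ℕ) : ℝ) / ((2 * i + 1) * d ^ (2 * i + 1) : ℕ) =
      2 * 10 ^ 9 * ∑ i ∈ range 8, (m / d : ℝ) ^ (2 * i + 1) / (2 * i + 1) := by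
  rw [mul_sum]
  refine sum_congr rfl fun i _ ↦ ?_
  push_cast
  rw [mul_div_mul_comm, div_pow]
  ring

lemma logRatioFloor_le {m d : ℕ} (h : m < d) :
    logRatioFloor m d ≤ 10 ^ 9 * Real.log ((1 + m / d) / (1 - m / d)) := by
  have hx : (m / d : ℝ) < 1 := (div_lt_one (mod_cast h.pos)).mpr (mod_cast h)
  have hseries := Real.sum_range_le_log_div (by positivity) hx 8
  have hround := cast_sum_div_le (range 8) (fun i ↦ 2 * 10 ^ 9 * m ^ (2 * i + 1))
    (fun i ↦ (2 * i + 1) * d ^ (2 * i + 1))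
  rw [sum_logRatio_terms] at hround
  rw [logRatioFloor]
  linarith

lemma le_logRatioFloor_add {m d : ℕ} (h : 3 * m ≤ d) :
    10 ^ 9 * Real.log ((1 + m / d) / (1 - m / d)) ≤ logRatioFloor m d + 26 := by
  set x : ℝ := m / d
  have hx0 : 0 ≤ x := by positivity
  have hx3 : x ≤ 1 / 3 := div_le_of_le_mul₀ (by positivity) (by norm_num) <| by
    have : (3 * m : ℝ) ≤ d := mod_cast h
    linarith
  have hseries := Real.log_div_le_sum_range_add hx0 (hx3.trans_lt (by norm_num)) 8
  have hrem : x ^ (2 * 8 + 1) / (1 - x ^ 2) ≤ (1 / 3) ^ (2 * 8 + 1) / (1 - (1 / 3) ^ 2) := by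
    gcongr
  have hround := sum_div_le_cast_add_card (range 8) (fun i ↦ 2 * 10 ^ 9 * m ^ (2 * i + 1))
    (fun i ↦ (2 * i + 1) * d ^ (2 * i + 1))
  rw [sum_logRatio_terms, card_range, ← logRatioFloor] at hround
  norm_num at hrem hround
  linarith

lemma log_eq_log2_mul_add {n : ℕ} (hn : n ≠ 0) :
    Real.log n = n.log2 * Real.log 2 + Real.log
      ((1 + (n - 2 ^ n.log2 : ℕ) / (n + 2 ^ n.log2 : ℕ)) /
        (1 - (n - 2 ^ n.log2 : ℕ) / (n + 2 ^ n.log2 : ℕ))) := by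
  have hquot : (1 + (n - 2 ^ n.log2 : ℝ) / (n + 2 ^ n.log2)) /
      (1 - (n - 2 ^ n.log2 : ℝ) / (n + 2 ^ n.log2)) = n / 2 ^ n.log2 := by
    field_simp
    ring
  push_cast [Nat.log2_self_le hn]
  rw [hquot, Real.log_div (by positivity) (by positivity), Real.log_pow]
  ring

lemma logFloor_le (n : ℕ) : logFloor n ≤ 10 ^ 9 * Real.log n := by
  rcases eq_or_ne n 0 with rfl | hn
  · simp [logFloor, logRatioFloor]
  have hratio := logRatioFloor_le (m := n - 2 ^ n.log2) (d := n + 2 ^ n.log2)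
    (by have := n.log2.two_pow_pos; lia)
  have htwo := mul_le_mul_of_nonneg_left Real.log_two_gt_d9.le (Nat.cast_nonneg (α := ℝ) n.log2)
  rw [log_eq_log2_mul_add hn, logFloor]
  push_cast at hratio ⊢
  linarith

lemma le_logCeil (n : ℕ) : 10 ^ 9 * Real.log n ≤ logCeil n := by
  rcases eq_or_ne n 0 with rfl | hn
  · simp
  have hratio := le_logRatioFloor_add (m := n - 2 ^ n.log2) (d := n + 2 ^ n.log2)
    (by have := Nat.lt_log2_self (n := n); lia)
  have htwo := mul_le_mul_of_nonneg_left Real.log_two_lt_d9.le (Nat.cast_nonneg (α := ℝ) n.log2)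
  rw [log_eq_log2_mul_add hn, logCeil, logFloor]
  push_cast at hratio ⊢
  linarith

/-! ### The remainder series -/

/-- The part of `(log n) ^ 2 / (n ^ 2 - n)` left after subtracting
`(log n) ^ 2 * (n ^ 2 / (n ^ 2 - 1) ^ 2)`. -/
noncomputable def logSqRemainder (n : ℕ) : ℝ :=
  Real.log n ^ 2 * ((n ^ 2 - n - 1) / (n * (n ^ 2 - 1) ^ 2))

lemma log_sq_div_eq_add_logSqRemainder {n : ℕ} (hn : 1 < n) :
    Real.log n ^ 2 / ((n : ℝ) ^ 2 - n) =
      Real.log n ^ 2 * ((n : ℝ) ^ 2 / ((n : ℝ) ^ 2 - 1) ^ 2) + logSqRemainder n := by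
  have hn1 : (1 : ℝ) < n := mod_cast hn
  have hsub_ne : (n : ℝ) - 1 ≠ 0 := by linarith
  have hsq_sub_one : (n : ℝ) ^ 2 - 1 = (n - 1) * (n + 1) := by ring
  have hsq_sub : (n : ℝ) ^ 2 - n = n * (n - 1) := by ring
  rw [logSqRemainder, hsq_sub_one, hsq_sub]
  field_simp
  ring

lemma logSqRemainder_nonneg (n : ℕ) : 0 ≤ logSqRemainder n := by
  rcases lt_or_ge n 2 with hn | hn
  · interval_cases n <;> simp [logSqRemainder]
  · have h : (2 : ℝ) ≤ n := mod_cast hn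
    have : (0 : ℝ) ≤ n ^ 2 - n - 1 := by nlinarith
    unfold logSqRemainder
    positivity

lemma logSqRemainder_le (n : ℕ) :
    logSqRemainder n ≤ 1 / n * (Real.log n ^ 2 / (n : ℝ) ^ 2) := by
  rcases lt_or_ge n 2 with hn | hn
  · interval_cases n <;> simp [logSqRemainder]
  · have h : (2 : ℝ) ≤ n := mod_cast hn
    have hsq : (0 : ℝ) < n ^ 2 - 1 := by nlinarith
    have hcoeff : ((n ^ 2 - n - 1) / (n * (n ^ 2 - 1) ^ 2) : ℝ) ≤ 1 / (n * n ^ 2) := by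
      rw [div_le_div_iff₀ (by positivity) (by positivity)]
      have hdiff : (0 : ℝ) ≤ n ^ 3 * (n - 1) + n :=
        add_nonneg (mul_nonneg (by positivity) (by linarith)) n.cast_nonneg
      linarith
    calc logSqRemainder n ≤ Real.log n ^ 2 * (1 / (n * n ^ 2)) := by
          unfold logSqRemainder; gcongr
      _ = _ := by ring

lemma summable_logSqRemainder : Summable logSqRemainder := by
  refine .of_nonneg_of_le logSqRemainder_nonneg (fun n ↦ (logSqRemainder_le n).trans ?_)
    (hasSum_log_pow_div_pow 2 one_lt_two).summable
  exact mul_le_of_le_one_left (by positivity) (by simpa using Nat.cast_inv_le_one n)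

lemma tsum_nat_add_logSqRemainder_le {N : ℕ} (hN : Real.exp 1 ≤ N) :
    ∑' n : ℕ, logSqRemainder (n + N + 1) ≤ 1 / N * logPowTail 2 N := by
  have hsum := (hasSum_log_pow_div_pow 2 one_lt_two).summable
  have hN0 : (0 : ℝ) < N := (Real.exp_pos 1).trans_le hN
  calc ∑' n : ℕ, logSqRemainder (n + N + 1)
      ≤ ∑' n : ℕ, 1 / N * (Real.log (n + N + 1 : ℕ) ^ 2 / ((n + N + 1 : ℕ) : ℝ) ^ 2) := by
        refine ((summable_nat_add_iff (N + 1)).mpr summable_logSqRemainder).tsum_le_tsum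
          (fun n ↦ (logSqRemainder_le _).trans ?_)
          (((summable_nat_add_iff (N + 1)).mpr hsum).mul_left _)
        gcongr
        lia
    _ ≤ 1 / N * logPowTail 2 N := by
        rw [tsum_mul_left]
        gcongr
        exact tsum_nat_add_le_logPowTail le_rfl hN

/-! ### Numerical evaluation -/

lemma le_sum_log_div_sq (s : Finset ℕ) :
    ((∑ n ∈ s, logFloor n * 10 ^ 9 / n ^ 2 : ℕ) : ℝ) / 10 ^ 18 ≤
      ∑ n ∈ s, Real.log n / (n : ℝ) ^ 2 := by
  rw [div_le_iff₀ (by positivity), sum_mul]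
  refine (cast_sum_div_le s _ _).trans (sum_le_sum fun n _ ↦ ?_)
  push_cast
  rw [div_mul_eq_mul_div]
  gcongr ?_ / _
  linarith [logFloor_le n]

lemma sum_log_sq_mul_le (s : Finset ℕ) (a b : ℕ → ℕ) :
    ∑ n ∈ s, Real.log n ^ 2 * ((a n : ℝ) / b n) ≤
      (((∑ n ∈ s, logCeil n ^ 2 * a n / b n : ℕ) : ℝ) + #s) / 10 ^ 18 := by
  rw [le_div_iff₀ (by positivity), sum_mul]
  refine (sum_le_sum fun n _ ↦ ?_).trans (sum_div_le_cast_add_card s _ _)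
  have hsq : (10 ^ 9 * Real.log n) ^ 2 ≤ (logCeil n : ℝ) ^ 2 :=
    pow_le_pow_left₀ (by positivity) (le_logCeil n) 2
  calc Real.log n ^ 2 * (a n / b n) * 10 ^ 18
      = (10 ^ 9 * Real.log n) ^ 2 * (a n / b n : ℝ) := by ring
    _ ≤ (logCeil n : ℝ) ^ 2 * (a n / b n : ℝ) := by gcongr
    _ = ((logCeil n ^ 2 * a n : ℕ) : ℝ) / b n := by push_cast; ring

/-- Cutting a long range into blocks keeps the recursion shallow when the kernel evaluates a sum. -/
lemma sum_range_mul_eq_sum_sum {M : Type*} [AddCommMonoid M] (f : ℕ → M) (a b : ℕ) :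
    ∑ n ∈ range (a * b), f n = ∑ i ∈ range a, ∑ j ∈ range b, f (i * b + j) := by
  induction a with
  | zero => simp
  | succ a ih => rw [Nat.succ_mul, sum_range_add, ih, sum_range_succ]

lemma exp_one_le_natCast {n : ℕ} (hn : 3 ≤ n) : Real.exp 1 ≤ n :=
  Real.exp_one_lt_three.le.trans (mod_cast hn)

lemma le_logPowZeta_one_two : 0.937547 ≤ logPowZeta 1 2 := by
  have hcert : 933246851418475848 ≤ ∑ n ∈ range (40 * 50), logFloor n * 10 ^ 9 / n ^ 2 := by
    rw [sum_range_mul_eq_sum_sum]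
    decide +kernel
  have hsum : 0.933246851 ≤ ∑ n ∈ range 2000, Real.log n / (n : ℝ) ^ 2 := by
    refine (le_sum_log_div_sq _).trans' ?_
    rw [le_div_iff₀ (by positivity)]
    exact (Nat.cast_le (α := ℝ).mpr hcert).trans' (by norm_num)
  have hlog : 7.6009 ≤ Real.log 2000 := by
    have hcert : (7600900000 : ℝ) ≤ logFloor 2000 := mod_cast by decide +kernel
    have hround := hcert.trans (logFloor_le 2000)
    push_cast at hround
    linarith
  have hzeta := le_logPowZeta_two one_le_two (exp_one_le_natCast (by simp : 3 ≤ 2000))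
  simp only [pow_one, logPowTail, zero_add, Nat.cast_zero, one_mul] at hzeta
  push_cast at hzeta
  linarith

lemma logPowTail_two_le : logPowTail 2 (1999 : ℕ) ≤ 0.0375023 := by
  have hlog : Real.log 1999 ≤ 7.600403 := by
    have hcert : (logCeil 1999 : ℝ) ≤ 7600403000 := mod_cast by decide +kernel
    have hround := (le_logCeil 1999).trans hcert
    push_cast at hround
    linarith
  have hlog_sq : Real.log 1999 ^ 2 ≤ 7.600403 ^ 2 :=
    pow_le_pow_left₀ (Real.log_nonneg (by norm_num)) hlog 2
  simp only [logPowTail]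
  push_cast
  linarith

lemma logPowZeta_two_two_le : logPowZeta 2 2 ≤ 1.9892876 := by
  have hcert : ∑ n ∈ range (40 * 50), logCeil n ^ 2 * 1 / n ^ 2 ≤ 1951785297540524170 := by
    rw [sum_range_mul_eq_sum_sum]
    decide +kernel
  have hsum : ∑ n ∈ range 2000, Real.log n ^ 2 / (n : ℝ) ^ 2 ≤ 1.951785298 := by
    have hround := sum_log_sq_mul_le (range 2000) 1 (· ^ 2)
    simp only [Pi.one_apply, Nat.cast_one, Nat.cast_pow, mul_one_div, card_range] at hround
    refine hround.trans ?_
    rw [div_le_iff₀ (by positivity)]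
    linarith [Nat.cast_le (α := ℝ).mpr hcert]
  linarith [logPowZeta_two_le le_rfl (exp_one_le_natCast (by simp : 3 ≤ 1999)), logPowTail_two_le]

/-- For `N ≤ (m + 1) ^ 2` the coprimality condition singles out exactly the primes among the numbers
`n ≥ 2`, and one `gcd` is far cheaper to evaluate than the decision procedure for `Nat.Prime`. -/
lemma sum_primes_le_sum_coprime_factorial (f : ℕ → ℕ) (N m : ℕ) :
    ∑ p ∈ range N with p.Prime, f p ≤
      ∑ n ∈ range N, if n.Coprime (min (n - 1) m)! then f n else 0 := by
  rw [← sum_filter]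
  refine sum_le_sum_of_subset fun p hp ↦ ?_
  rw [mem_filter] at hp ⊢
  refine ⟨hp.1, (Nat.coprime_factorial_iff hp.2.ne_one).mpr ?_⟩
  rw [hp.2.minFac_eq]
  have := hp.2.pos
  lia

lemma sum_primes_logSqRemainder_le :
    ∑ p ∈ range 2000 with p.Prime, logSqRemainder p ≤ 0.0974738 := by
  have hcert : ∑ n ∈ range (40 * 50), (if n.Coprime (min (n - 1) 44)! then
      logCeil n ^ 2 * (n ^ 2 - n - 1) / (n * (n ^ 2 - 1) ^ 2) else 0) ≤ 97473711507772808 := by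
    rw [sum_range_mul_eq_sum_sum]
    decide +kernel
  have hprimes := (sum_primes_le_sum_coprime_factorial
    (fun n ↦ logCeil n ^ 2 * (n ^ 2 - n - 1) / (n * (n ^ 2 - 1) ^ 2)) 2000 44).trans hcert
  have hcast (p : ℕ) (hp : p ∈ ({p ∈ range 2000 | p.Prime} : Finset ℕ)) : logSqRemainder p =
      Real.log p ^ 2 * ((p ^ 2 - p - 1 : ℕ) / (p * (p ^ 2 - 1) ^ 2 : ℕ)) := by
    have hp2 := (mem_filter.mp hp).2.two_le
    have hp_sq : p + 1 ≤ p ^ 2 := by nlinarith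
    rw [logSqRemainder, Nat.sub_sub]
    push_cast [hp_sq, (by lia : 1 ≤ p ^ 2)]
    ring
  rw [sum_congr rfl hcast]
  refine (sum_log_sq_mul_le _ _ _).trans ?_
  rw [div_le_iff₀ (by positivity)]
  have hcard : #{p ∈ range 2000 | p.Prime} ≤ 2000 := (card_filter_le _ _).trans_eq (card_range _)
  exact (add_le_add (Nat.cast_le.mpr hprimes) (Nat.cast_le.mpr hcard)).trans (by norm_num)

lemma tsum_primes_le {f : ℕ → ℝ} (hf : Summable f) (hf0 : ∀ n, 0 ≤ f n) (N : ℕ) :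
    ∑' p : Nat.Primes, f p ≤ ∑ p ∈ range N with p.Prime, f p + ∑' n, f (n + N) := by
  have hind := hf.indicator {p | p.Prime}
  have htsum : ∑' p : Nat.Primes, f p = ∑' n, {p | Nat.Prime p}.indicator f n :=
    tsum_subtype {p | Nat.Prime p} f
  rw [htsum, ← hind.sum_add_tsum_nat_add N, sum_filter]
  gcongr with n
  · simp [indicator_apply]
  · exact (summable_nat_add_iff N).mpr hind
  · exact (summable_nat_add_iff N).mpr hf
  · exact indicator_le_self' (fun _ _ ↦ hf0 _) _

lemma tsum_primes_logSqRemainder_le : ∑' p : Nat.Primes, logSqRemainder p ≤ 0.0974926 := by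
  have htail := tsum_nat_add_logSqRemainder_le (exp_one_le_natCast (by simp : 3 ≤ 1999))
  have hsplit := tsum_primes_le summable_logSqRemainder logSqRemainder_nonneg 2000
  push_cast at htail
  linarith [sum_primes_logSqRemainder_le, logPowTail_two_le]

lemma logPowZeta_quotient_le :
    logPowZeta 2 2 / logPowZeta 0 2 - (logPowZeta 1 2 / logPowZeta 0 2) ^ 2 ≤ 0.884489 := by
  have hlow : 1.6449333 ≤ logPowZeta 0 2 := by
    rw [logPowZeta_zero_two]
    nlinarith [Real.pi_gt_d6]
  have hupp : logPowZeta 0 2 ≤ 1.6449346 := by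
    rw [logPowZeta_zero_two]
    nlinarith [Real.pi_lt_d6, Real.pi_pos]
  have hpos : 0 < logPowZeta 0 2 := by linarith
  have hfirst : logPowZeta 2 2 / logPowZeta 0 2 ≤ 1.2093425 := by
    rw [div_le_iff₀ hpos]
    linarith [logPowZeta_two_two_le]
  have hsecond : 0.56996 ≤ logPowZeta 1 2 / logPowZeta 0 2 := by
    rw [le_div_iff₀ hpos]
    linarith [le_logPowZeta_one_two]
  have hsecond_sq := pow_le_pow_left₀ (by norm_num) hsecond 2
  linarith

/-- The sum over all primes `p` of `(log p)²/(p² − p)` converges and is `< 0.982`. -/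
theorem sum_log_sq_div_p_sq_sub_p_lt :
    Summable (fun p : Nat.Primes =>
      Real.log (p : ℕ) ^ 2 / (((p : ℕ) : ℝ) ^ 2 - ((p : ℕ) : ℝ))) ∧
    ∑' p : Nat.Primes, Real.log (p : ℕ) ^ 2 / (((p : ℕ) : ℝ) ^ 2 - ((p : ℕ) : ℝ)) <
      0.982 := by
  have hrem : Summable fun p : Nat.Primes ↦ logSqRemainder p :=
    summable_logSqRemainder.comp_injective Subtype.val_injective
  have hsum := (hasSum_primes_log_sq_mul one_lt_two).add hrem.hasSum
  simp only [fun p : Nat.Primes ↦ log_sq_div_eq_add_logSqRemainder p.prop.one_lt]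
  refine ⟨hsum.summable, hsum.tsum_eq.trans_lt ?_⟩
  linarith [logPowZeta_quotient_le, tsum_primes_logSqRemainder_le]
end

section
/- Assume the Riemann Hypothesis. Then for all x ≥ 10^13, one has Σ_{n ≤ x} Λ(n)²/n ≤ (log x)²/2 + 4.5222, where Λ is the von Mangoldt function. -/
open ArithmeticFunction

/-!
The sum `∑_{n ≤ x} Λ(n) log n / n` is bounded first, and the square `Λ(n)²` is recovered from
`Λ(n) ≤ log n`, with a gain from the prime powers `n = 4, 8`.

Under RH the function `Z(s) = (s - 1) ζ(s) / (s + 9)` has no zero in the half-plane `re s > 1/2`,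
hence has a holomorphic logarithm `G` on the disc of centre `1 + σ` and radius `σ + 1/2`, which
contains `1` in its interior. The Borel–Carathéodory theorem, in the form that uses the mean of the
positive part of `re G` over the circle rather than its supremum, bounds the Taylor coefficients of
`G` at `1 + σ`. If `Pᵢ` denotes the `i`-th term of the Taylor series of `G''` at `1 + σ`, evaluated
at `1`, then `∑ᵢ Pᵢ = G''(1)` is an absolute constant, the tail of this series is small, and
`∑ₙ Λ(n) log n n^(-1-σ) (σ log n)ⁱ / i! ≤ Pᵢ + (i + 1) / σ²`.

A polynomial `∑_{i ≤ k} wᵢ μⁱ / i!` that dominates `exp μ` for `0 ≤ μ ≤ σ log x` turns these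
inequalities into `∑_{n ≤ x} Λ(n) log n / n ≤ ∑_{i ≤ k} wᵢ (Pᵢ + (i + 1) / σ²)`. The weights are
`1` up to a geometrically decaying error near `i = k`, so the right-hand side is about
`G''(1) + k² / (2 σ²)`; this is `(log x)² / 2 + O(1)` for `σ = (log x)³` and `k` close to
`σ log x`.
-/

open MeasureTheory Metric Set Filter Topology

section Zeta

/-- The integral `∫₁^∞ {t} t^(-s-1) dt`, which continues `ζ` to the half-plane `0 < re s`. -/
noncomputable def fractMellin (s : ℂ) : ℂ :=
  ∫ t in Ioi (1 : ℝ), ((Int.fract t : ℝ) : ℂ) * (t : ℂ) ^ (-(s + 1))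

lemma norm_fract_mul_cpow_le {s : ℂ} {t : ℝ} (ht : 0 < t) :
    ‖((Int.fract t : ℝ) : ℂ) * (t : ℂ) ^ (-(s + 1))‖ ≤ t ^ (-(s.re + 1)) := by
  rw [norm_mul, Complex.norm_cpow_eq_rpow_re_of_pos ht, Complex.norm_real, Real.norm_eq_abs,
    Int.abs_fract]
  simpa using mul_le_of_le_one_left (by positivity) (Int.fract_lt_one t).le

lemma integrableOn_Ioi_one_rpow {a : ℝ} (ha : 0 < a) :
    IntegrableOn (fun t : ℝ ↦ t ^ (-(a + 1))) (Ioi 1) :=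
  integrableOn_Ioi_rpow_of_lt (by linarith) one_pos

lemma integral_Ioi_one_rpow {a : ℝ} (ha : 0 < a) :
    ∫ t in Ioi (1 : ℝ), t ^ (-(a + 1)) = 1 / a := by
  rw [integral_Ioi_rpow_of_lt (by linarith) one_pos]
  simp

lemma integrableOn_fract_mul_cpow {s : ℂ} (hs : 0 < s.re) :
    IntegrableOn (fun t : ℝ ↦ ((Int.fract t : ℝ) : ℂ) * (t : ℂ) ^ (-(s + 1))) (Ioi 1) := by
  refine (integrableOn_Ioi_one_rpow hs).mono' (by fun_prop) ?_
  filter_upwards [ae_restrict_mem measurableSet_Ioi] with t ht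
  exact norm_fract_mul_cpow_le (one_pos.trans ht)

lemma norm_fractMellin_le {s : ℂ} (hs : 0 < s.re) : ‖fractMellin s‖ ≤ 1 / s.re := by
  rw [← integral_Ioi_one_rpow hs]
  refine norm_integral_le_of_norm_le (integrableOn_Ioi_one_rpow hs) ?_
  filter_upwards [ae_restrict_mem measurableSet_Ioi] with t ht
  exact norm_fract_mul_cpow_le (one_pos.trans ht)

lemma fractMellin_eq_mellin (s : ℂ) :
    fractMellin s = mellin ((Ioi (1 : ℝ)).indicator fun t ↦ ((Int.fract t : ℝ) : ℂ)) (-s) := by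
  have h (t : ℝ) : (t : ℂ) ^ (-s - 1) • (Ioi (1 : ℝ)).indicator
      (fun t ↦ ((Int.fract t : ℝ) : ℂ)) t = (Ioi (1 : ℝ)).indicator
      (fun t ↦ ((Int.fract t : ℝ) : ℂ) * (t : ℂ) ^ (-(s + 1))) t := by
    rw [neg_add', smul_eq_mul]
    by_cases ht : t ∈ Ioi 1 <;> simp [ht, mul_comm]
  simp_rw [mellin, h, setIntegral_indicator measurableSet_Ioi,
    inter_eq_right.2 (Ioi_subset_Ioi zero_le_one), fractMellin]

lemma differentiableAt_fractMellin {s : ℂ} (hs : 0 < s.re) :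
    DifferentiableAt ℂ fractMellin s := by
  set φ := (Ioi (1 : ℝ)).indicator fun t ↦ ((Int.fract t : ℝ) : ℂ) with hφ
  have hφ_le (t : ℝ) : ‖φ t‖ ≤ 1 := by
    refine (norm_indicator_le_norm_self _ _).trans ?_
    simpa [Int.abs_fract] using (Int.fract_lt_one t).le
  have h : DifferentiableAt ℂ (mellin φ) (-s) := by
    refine mellin_differentiableAt_of_isBigO_rpow (a := 0) (b := -s.re - 1) ?_ ?_ (by simpa) ?_
      (by simp)
    · refine ((locallyIntegrable_const (1 : ℝ)).mono ?_
        (.of_forall fun t ↦ (hφ_le t).trans (le_abs_self _))).locallyIntegrableOn _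
      exact Measurable.aestronglyMeasurable (by measurability)
    · exact .of_bound 1 (.of_forall fun t ↦ by simpa using hφ_le t)
    · refine .of_bound 1 ?_
      filter_upwards [Ioo_mem_nhdsGT (zero_lt_one' ℝ)] with t ht
      rw [hφ, indicator_of_notMem (by simpa using ht.2.le), norm_zero]
      positivity
  rw [funext fractMellin_eq_mellin]
  exact h.comp s differentiableAt_id.neg

lemma fractMellin_ofReal (a : ℝ) :
    fractMellin a = ((∫ t in Ioi (1 : ℝ), Int.fract t * t ^ (-(a + 1)) : ℝ) : ℂ) := by
  rw [fractMellin, ← integral_complex_ofReal]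
  refine setIntegral_congr_fun measurableSet_Ioi fun t (ht : 1 < t) ↦ ?_
  push_cast [Complex.ofReal_cpow (zero_le_one.trans ht.le)]
  rfl

lemma re_fractMellin_ofReal_nonneg (a : ℝ) : 0 ≤ (fractMellin a).re := by
  rw [fractMellin_ofReal, Complex.ofReal_re]
  refine setIntegral_nonneg measurableSet_Ioi fun t (ht : 1 < t) ↦ ?_
  exact mul_nonneg (Int.fract_nonneg t) (Real.rpow_nonneg (zero_le_one.trans ht.le) _)

lemma integrableOn_fract_mul_rpow {a : ℝ} (ha : 0 < a) :
    IntegrableOn (fun t : ℝ ↦ Int.fract t * t ^ (-(a + 1))) (Ioi 1) := by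
  refine (integrableOn_Ioi_one_rpow ha).mono' (by fun_prop) ?_
  filter_upwards [ae_restrict_mem measurableSet_Ioi] with t (ht : 1 < t)
  have ht' : 0 < t ^ (-(a + 1)) := by positivity
  rw [norm_mul, Real.norm_eq_abs, Int.abs_fract, Real.norm_of_nonneg ht'.le]
  exact mul_le_of_le_one_left ht'.le (Int.fract_lt_one t).le

lemma integral_one_sub_fract_mul_rpow {a : ℝ} (ha : 0 < a) :
    ∫ t in Ioi (1 : ℝ), (1 - Int.fract t) * t ^ (-(a + 1)) = 1 / a - (fractMellin a).re := by
  rw [fractMellin_ofReal, Complex.ofReal_re, ← integral_Ioi_one_rpow ha,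
    ← integral_sub (integrableOn_Ioi_one_rpow ha) (integrableOn_fract_mul_rpow ha)]
  simp only [one_sub_mul]

lemma antitoneOn_one_div_sub_re_fractMellin :
    AntitoneOn (fun a : ℝ ↦ 1 / a - (fractMellin a).re) (Ioi 0) := by
  intro a (ha : 0 < a) b (hb : 0 < b) hab
  have hint {a : ℝ} (ha : 0 < a) :
      IntegrableOn (fun t : ℝ ↦ (1 - Int.fract t) * t ^ (-(a + 1))) (Ioi 1) := by
    simp only [one_sub_mul]
    exact (integrableOn_Ioi_one_rpow ha).sub (integrableOn_fract_mul_rpow ha)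
  simp only [← integral_one_sub_fract_mul_rpow, ha, hb]
  refine setIntegral_mono_on (hint hb) (hint ha) measurableSet_Ioi fun t (ht : 1 < t) ↦ ?_
  have h := (Int.fract_lt_one t).le
  gcongr
  · linarith

lemma neg_inv_sq_le_re_deriv_fractMellin {a : ℝ} (ha : 0 < a) :
    -(a ^ 2)⁻¹ ≤ (deriv fractMellin a).re := by
  have hd : HasDerivAt (fun a : ℝ ↦ 1 / a - (fractMellin a).re)
      (-(a ^ 2)⁻¹ - (deriv fractMellin a).re) a := by
    simpa only [one_div] using (hasDerivAt_inv ha.ne').fun_sub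
      (differentiableAt_fractMellin (by simpa)).hasDerivAt.real_of_complex
  have h := antitoneOn_one_div_sub_re_fractMellin.derivWithin_nonpos (x := a)
  rw [derivWithin_of_isOpen isOpen_Ioi ha, hd.deriv] at h
  linarith

lemma riemannZeta₀_eq_of_one_lt_re {s : ℂ} (hs : 1 < s.re) :
    riemannZeta₀ s = 1 - s * fractMellin s := by
  have hs1 : s - 1 ≠ 0 := sub_ne_zero.2 (by rintro rfl; simp at hs)
  have hζ : riemannZeta s = s * ∫ t in Ioi (1 : ℝ), (⌊t⌋₊ : ℂ) * (t : ℂ) ^ (-(s + 1)) := by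
    have h := LSeries_eq_mul_integral_of_nonneg 1 zero_le_one hs
      (by simpa using Asymptotics.isBigO_refl _ _) (by simp)
    rw [← LSeries_one_eq_riemannZeta hs, Pi.one_def]
    simpa using h
  have hI : ∫ t in Ioi (1 : ℝ), (t : ℂ) ^ (-s) = (s - 1)⁻¹ := by
    rw [integral_Ioi_cpow_of_lt (by simpa using hs) one_pos, Complex.ofReal_one, Complex.one_cpow,
      show -s + 1 = -(s - 1) by ring, neg_div_neg_eq, one_div]
  have hfloor : ∫ t in Ioi (1 : ℝ), (⌊t⌋₊ : ℂ) * (t : ℂ) ^ (-(s + 1))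
      = (s - 1)⁻¹ - fractMellin s := by
    rw [fractMellin, ← hI, ← integral_sub (integrableOn_Ioi_cpow_of_lt (by simpa) one_pos)
      (integrableOn_fract_mul_cpow (one_pos.trans hs))]
    refine setIntegral_congr_fun measurableSet_Ioi fun t (ht : 1 < t) ↦ ?_
    have ht0 : 0 < t := one_pos.trans ht
    have hcpow : (t : ℂ) ^ (-s) = t * (t : ℂ) ^ (-(s + 1)) := by
      rw [neg_add', Complex.cpow_sub _ _ (mod_cast ht0.ne'), Complex.cpow_one,
        mul_div_cancel₀ _ (mod_cast ht0.ne')]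
    simp [hcpow, ← natCast_floor_eq_intCast_floor ht0.le, ← Int.self_sub_floor, sub_mul]
  rw [riemannZeta₀, if_neg (sub_ne_zero.1 hs1), hζ, hfloor]
  field_simp
  ring

lemma riemannZeta₀_eq {s : ℂ} (hs : 0 < s.re) : riemannZeta₀ s = 1 - s * fractMellin s := by
  have hopen : IsOpen {s : ℂ | 0 < s.re} := isOpen_lt continuous_const Complex.continuous_re
  have hf : DifferentiableOn ℂ (fun s ↦ 1 - s * fractMellin s) {s : ℂ | 0 < s.re} := fun s hs ↦ by
    have := differentiableAt_fractMellin hs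
    exact DifferentiableAt.differentiableWithinAt (by fun_prop)
  refine AnalyticOnNhd.eqOn_of_preconnected_of_eventuallyEq (z₀ := 2)
    (differentiable_riemannZeta₀.differentiableOn.analyticOnNhd hopen) (hf.analyticOnNhd hopen)
    (convex_halfSpace_re_gt 0).isPreconnected (by simp) ?_ hs
  filter_upwards [(isOpen_lt continuous_const Complex.continuous_re).mem_nhds
    (show (1 : ℝ) < (2 : ℂ).re by simp)] with s hs using riemannZeta₀_eq_of_one_lt_re hs

lemma riemannZeta₁_eq {s : ℂ} (hs : 0 < s.re) :
    riemannZeta₁ s = s * (1 - (s - 1) * fractMellin s) := by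
  rw [riemannZeta₁, riemannZeta₀_eq hs]
  ring

lemma riemannZeta₁_eq_sub_one_mul {s : ℂ} (hs : s ≠ 1) :
    riemannZeta₁ s = (s - 1) * riemannZeta s := by
  rw [riemannZeta_eq_inv_sub_mul hs, mul_inv_cancel_left₀ (sub_ne_zero.2 hs)]

lemma riemannZeta₁_ne_zero_of_riemannHypothesis (hRH : RiemannHypothesis) {s : ℂ}
    (hs : 1 / 2 < s.re) : riemannZeta₁ s ≠ 0 := by
  rcases eq_or_ne s 1 with rfl | h1
  · simp
  rw [riemannZeta₁_eq_sub_one_mul h1]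
  refine mul_ne_zero (sub_ne_zero.2 h1) fun h0 ↦ (hRH s h0 ?_ h1).not_gt hs
  rintro ⟨n, rfl⟩
  norm_num at hs
  linarith [n.cast_nonneg (α := ℝ)]

lemma re_deriv_riemannZeta₀_one_le :
    (deriv riemannZeta₀ 1).re ≤ Real.eulerMascheroniConstant := by
  have hf := (differentiableAt_fractMellin (s := 1) (by simp)).hasDerivAt
  have hd : HasDerivAt riemannZeta₀ (-(fractMellin 1 + deriv fractMellin 1)) 1 := by
    refine (((hasDerivAt_id (1 : ℂ)).mul hf).const_sub 1).congr_of_eventuallyEq ?_ |>.congr_deriv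
      (by simp)
    filter_upwards [(isOpen_lt continuous_const Complex.continuous_re).mem_nhds
      (show (0 : ℝ) < (1 : ℂ).re by simp)] with s hs using riemannZeta₀_eq hs
  have hone : Real.eulerMascheroniConstant = 1 - (fractMellin 1).re := by
    simpa using congrArg Complex.re (riemannZeta₀_eq (s := 1) (by simp))
  have hderiv := neg_inv_sq_le_re_deriv_fractMellin one_pos
  simp only [Complex.ofReal_one, one_pow, inv_one] at hderiv
  rw [hd.deriv, Complex.neg_re, Complex.add_re]
  linarith

lemma riemannZeta_ofReal {a : ℝ} (ha : 1 < a) :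
    riemannZeta a = ((∑' n : ℕ, 1 / (n : ℝ) ^ a : ℝ) : ℂ) := by
  rw [zeta_eq_tsum_one_div_nat_cpow (by simpa)]
  push_cast [Complex.ofReal_cpow (Nat.cast_nonneg _)]
  rfl

lemma norm_riemannZeta_le_riemannZeta_re {s : ℂ} (hs : 1 < s.re) :
    ‖riemannZeta s‖ ≤ (riemannZeta s.re).re := by
  rw [zeta_eq_tsum_one_div_nat_cpow hs, riemannZeta_ofReal hs, Complex.ofReal_re]
  refine tsum_of_norm_bounded (Real.summable_one_div_nat_rpow.2 hs).hasSum fun n ↦ ?_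
  have hs0 : s.re ≠ 0 := by linarith
  rw [norm_div, norm_one, Complex.norm_natCast_cpow_of_re_ne_zero n hs0]

lemma norm_riemannZeta_le {s : ℂ} (hs : 1 < s.re) : ‖riemannZeta s‖ ≤ 1 + 1 / (s.re - 1) := by
  refine (norm_riemannZeta_le_riemannZeta_re hs).trans ?_
  have hs1 : (s.re : ℂ) ≠ 1 := mod_cast hs.ne'
  rw [riemannZeta_eq_inv_sub_add hs1, riemannZeta₀_eq (by simp; linarith), Complex.add_re,
    Complex.sub_re, Complex.re_ofReal_mul, ← Complex.ofReal_one, ← Complex.ofReal_sub,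
    ← Complex.ofReal_inv, Complex.ofReal_re, Complex.ofReal_re]
  have := mul_nonneg (one_pos.trans hs).le (re_fractMellin_ofReal_nonneg s.re)
  rw [one_div]
  linarith

lemma one_le_norm_riemannZeta_ofReal {a : ℝ} (ha : 1 < a) : 1 ≤ ‖riemannZeta a‖ := by
  rw [riemannZeta_ofReal ha, Complex.norm_real]
  refine le_trans ?_ (le_abs_self _)
  simpa using (Real.summable_one_div_nat_rpow.2 ha).le_tsum 1 (fun n _ ↦ by positivity)

lemma norm_riemannZeta₁_le {s : ℂ} (hs : 0 < s.re) :
    ‖riemannZeta₁ s‖ ≤ ‖s‖ * (1 + ‖s - 1‖ / s.re) := by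
  rw [riemannZeta₁_eq hs, norm_mul, div_eq_mul_one_div]
  gcongr
  refine (norm_sub_le _ _).trans ?_
  rw [norm_one, norm_mul]
  gcongr
  exact norm_fractMellin_le hs

lemma norm_riemannZeta₁_le_of_one_lt_re {s : ℂ} (hs : 1 < s.re) :
    ‖riemannZeta₁ s‖ ≤ ‖s - 1‖ * (1 + 1 / (s.re - 1)) := by
  rw [riemannZeta₁_eq_sub_one_mul (by rintro rfl; simp at hs), norm_mul]
  gcongr
  exact norm_riemannZeta_le hs

lemma sub_one_le_norm_riemannZeta₁_ofReal {a : ℝ} (ha : 1 < a) : a - 1 ≤ ‖riemannZeta₁ a‖ := by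
  have hnorm : ‖(a : ℂ) - 1‖ = a - 1 := by
    rw [← Complex.ofReal_one, ← Complex.ofReal_sub, Complex.norm_of_nonneg (by linarith)]
  rw [riemannZeta₁_eq_sub_one_mul (mod_cast ha.ne'), norm_mul, hnorm]
  exact le_mul_of_one_le_right (by linarith) (one_le_norm_riemannZeta_ofReal ha)

end Zeta

section BorelCaratheodory

open Real (circleAverage)

open scoped ComplexConjugate

variable {G : ℂ → ℂ} {c : ℂ} {r : ℝ} {j : ℕ}

lemma norm_circleAverage_le {E : Type*} [NormedAddCommGroup E] [NormedSpace ℝ E] (f : ℂ → E)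
    (c : ℂ) (r : ℝ) : ‖circleAverage f c r‖ ≤ circleAverage (fun z ↦ ‖f z‖) c r := by
  have h2π : 0 ≤ 2 * Real.pi := by positivity
  rw [circleAverage, circleAverage, norm_smul, smul_eq_mul, Real.norm_of_nonneg (inv_nonneg.2 h2π)]
  gcongr
  exact intervalIntegral.norm_integral_le_integral_norm h2π

lemma circleAverage_mul_inv_sub_pow (hr : 0 < r) (hG : DiffContOnCl ℂ G (ball c r)) :
    circleAverage (fun z ↦ G z * ((z - c) ^ j)⁻¹) c r = iteratedDeriv j G c / j.factorial := by
  have hcauchy : (∮ z in C(c, r), (z - c)⁻¹ • (G z * ((z - c) ^ j)⁻¹))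
      = (2 * Real.pi * Complex.I / j.factorial) • iteratedDeriv j G c := by
    rw [← hG.circleIntegral_one_div_sub_center_pow_smul hr j]
    congr 1 with z
    simp only [pow_succ, one_div, mul_inv, smul_eq_mul]
    ring
  rw [Real.circleAverage_eq_circleIntegral hr.ne', hcauchy, smul_eq_mul, smul_eq_mul]
  field_simp [Complex.two_pi_I_ne_zero]

lemma conj_mul_inv_sub_pow_of_mem_sphere {z : ℂ} (hr : 0 < r) (hz : z ∈ sphere c r) :
    conj (G z) * ((z - c) ^ j)⁻¹ = ((r ^ (2 * j))⁻¹ : ℝ) • conj (G z * (z - c) ^ j) := by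
  have hz0 : z - c ≠ 0 := sub_ne_zero.2 (ne_of_mem_sphere hz hr.ne')
  have hconj : conj (z - c) * (z - c) = (r : ℂ) ^ 2 := by
    rw [Complex.conj_mul', mem_sphere_iff_norm.1 hz]
  rw [map_mul, map_pow, Complex.real_smul]
  push_cast
  rw [pow_mul, ← hconj, mul_pow]
  have hconj0 : conj (z - c) ≠ 0 := (map_ne_zero (starRingEnd ℂ)).2 hz0
  field_simp

lemma circleAverage_conj_mul_inv_sub_pow (hr : 0 < r) (hG : DiffContOnCl ℂ G (ball c r))
    (hj : j ≠ 0) : circleAverage (fun z ↦ conj (G z) * ((z - c) ^ j)⁻¹) c r = 0 := by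
  have hGpow : DiffContOnCl ℂ (fun z ↦ G z * (z - c) ^ j) (ball c |r|) := by
    rw [abs_of_pos hr]
    exact hG.smul ((differentiable_id.sub_const c).pow j).diffContOnCl
  have hmean : circleAverage (fun z ↦ G z * (z - c) ^ j) c r = 0 := by
    rw [hGpow.circleAverage, sub_self, zero_pow hj, mul_zero]
  have hcont : ContinuousOn (fun z ↦ G z * (z - c) ^ j) (sphere c |r|) :=
    (hGpow.continuousOn_ball).mono sphere_subset_closedBall
  have hconj := Complex.conjCLE.toContinuousLinearMap.circleAverage_comp_comm
    hcont.circleIntegrable'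
  rw [hmean, ContinuousLinearMap.map_zero] at hconj
  rw [Real.circleAverage_congr_sphere (f₂ := ((r ^ (2 * j))⁻¹ : ℝ) •
    (Complex.conjCLE.toContinuousLinearMap ∘ fun z ↦ G z * (z - c) ^ j)) fun z hz ↦
      conj_mul_inv_sub_pow_of_mem_sphere hr (abs_of_pos hr ▸ hz),
    Real.circleAverage_smul, hconj, smul_zero]

lemma circleAverage_two_mul_re_mul_inv_sub_pow (hr : 0 < r) (hG : DiffContOnCl ℂ G (ball c r))
    (hj : j ≠ 0) :
    circleAverage (fun z ↦ ((2 * (G z).re : ℝ) : ℂ) * ((z - c) ^ j)⁻¹) c r =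
      iteratedDeriv j G c / j.factorial := by
  have hcont : ContinuousOn G (sphere c |r|) := by
    rw [abs_of_pos hr]
    exact hG.continuousOn_ball.mono sphere_subset_closedBall
  have hinv : ContinuousOn (fun z : ℂ ↦ ((z - c) ^ j)⁻¹) (sphere c |r|) :=
    ContinuousOn.inv₀ (by fun_prop) fun z hz ↦
      pow_ne_zero _ (sub_ne_zero.2 (ne_of_mem_sphere hz (abs_pos.2 hr.ne').ne'))
  have hadd := Real.circleAverage_fun_add (f₁ := fun z ↦ G z * ((z - c) ^ j)⁻¹)
    (f₂ := fun z ↦ conj (G z) * ((z - c) ^ j)⁻¹) (hcont.mul hinv).circleIntegrable'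
    ((hcont.star).mul hinv).circleIntegrable'
  rw [circleAverage_mul_inv_sub_pow hr hG, circleAverage_conj_mul_inv_sub_pow hr hG hj,
    add_zero] at hadd
  rw [← hadd]
  congr 1 with z
  rw [← add_mul, Complex.add_conj]

/-- A form of the Borel–Carathéodory theorem in which the supremum of the real part over the circle
is replaced by the mean of its positive part. -/
theorem norm_iteratedDeriv_mul_pow_le (hr : 0 < r) (hG : DiffContOnCl ℂ G (ball c r))
    (hj : j ≠ 0) :
    ‖iteratedDeriv j G c‖ / j.factorial * r ^ j ≤
      4 * circleAverage (fun z ↦ max (G z).re 0) c r - 2 * (G c).re := by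
  have hG' : DiffContOnCl ℂ G (ball c |r|) := by rwa [abs_of_pos hr]
  have hre : ContinuousOn (fun z ↦ (G z).re) (sphere c |r|) :=
    Complex.continuous_re.comp_continuousOn
      (hG'.continuousOn_ball.mono sphere_subset_closedBall)
  have htwo : CircleIntegrable (fun z ↦ (2 : ℝ) • (G z).re) c r :=
    (continuousOn_const.mul hre).circleIntegrable'
  have hmax : CircleIntegrable (fun z ↦ (4 : ℝ) • max (G z).re 0) c r :=
    (continuousOn_const.mul (hre.sup continuousOn_const)).circleIntegrable'
  have hmean : circleAverage (fun z ↦ (G z).re) c r = (G c).re := by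
    rw [← hG'.circleAverage]
    exact Complex.reCLM.circleAverage_comp_comm
      (hG'.continuousOn_ball.mono sphere_subset_closedBall).circleIntegrable'
  have habs : ∀ x : ℝ, |2 * x| = (4 : ℝ) • max x 0 - (2 : ℝ) • x := fun x ↦ by
    rw [abs_mul, abs_two, smul_eq_mul, smul_eq_mul]
    rcases le_total 0 x with h | h
    · rw [abs_of_nonneg h, max_eq_left h]
      ring
    · rw [abs_of_nonpos h, max_eq_right h]
      ring
  calc ‖iteratedDeriv j G c‖ / j.factorial * r ^ j
      = ‖circleAverage (fun z ↦ ((2 * (G z).re : ℝ) : ℂ) * ((z - c) ^ j)⁻¹) c r‖ * r ^ j := by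
        rw [circleAverage_two_mul_re_mul_inv_sub_pow hr hG hj, norm_div, Complex.norm_natCast]
    _ ≤ circleAverage (fun z ↦ ‖((2 * (G z).re : ℝ) : ℂ) * ((z - c) ^ j)⁻¹‖) c r * r ^ j := by
        gcongr
        exact norm_circleAverage_le _ c r
    _ = circleAverage (fun z ↦ (r ^ j)⁻¹ • |2 * (G z).re|) c r * r ^ j := by
        congr 1
        refine Real.circleAverage_congr_sphere fun z hz ↦ ?_
        rw [mem_sphere_iff_norm, abs_of_pos hr] at hz
        rw [norm_mul, Complex.norm_real, Real.norm_eq_abs, norm_inv, norm_pow, hz, smul_eq_mul,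
          mul_comm]
    _ = circleAverage (fun z ↦ |2 * (G z).re|) c r := by
        rw [Real.circleAverage_fun_smul, smul_eq_mul, mul_comm,
          mul_inv_cancel_left₀ (by positivity)]
    _ = _ := by
        simp only [habs]
        rw [Real.circleAverage_fun_sub hmax htwo, Real.circleAverage_fun_smul,
          Real.circleAverage_fun_smul, hmean, smul_eq_mul, smul_eq_mul]

lemma norm_iteratedDeriv_le_of_circleAverage_le {R r₀ Θ : ℝ} (hr₀ : 0 ≤ r₀) (hR : r₀ < R)
    (hG : DifferentiableOn ℂ G (ball c R)) (hj : j ≠ 0)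
    (h : ∀ r ∈ Ioo r₀ R, 4 * circleAverage (fun z ↦ max (G z).re 0) c r - 2 * (G c).re ≤ Θ) :
    ‖iteratedDeriv j G c‖ ≤ j.factorial * Θ / R ^ j := by
  have hlim : Tendsto (fun r : ℝ ↦ ‖iteratedDeriv j G c‖ / j.factorial * r ^ j) (𝓝[<] R)
      (𝓝 (‖iteratedDeriv j G c‖ / j.factorial * R ^ j)) :=
    ((continuous_const.mul (continuous_pow j)).tendsto R).mono_left nhdsWithin_le_nhds
  have hle : ‖iteratedDeriv j G c‖ / j.factorial * R ^ j ≤ Θ := by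
    refine le_of_tendsto hlim ?_
    filter_upwards [Ioo_mem_nhdsLT hR] with r hr
    refine (norm_iteratedDeriv_mul_pow_le (hr₀.trans_lt hr.1) ?_ hj).trans (h r hr)
    exact (hG.mono (closure_ball_subset_closedBall.trans
      (closedBall_subset_ball hr.2))).diffContOnCl
  rwa [le_div_iff₀ (pow_pos (hr₀.trans_lt hR) j), ← div_le_iff₀' (by positivity),
    mul_div_right_comm]

end BorelCaratheodory

section HolomorphicLog

/-- `G` is a holomorphic branch of `log F` on `s`. -/
structure IsHolomorphicLogOn (G F : ℂ → ℂ) (s : Set ℂ) : Prop where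
  differentiableOn : DifferentiableOn ℂ G s
  exp_eq : ∀ z ∈ s, Complex.exp (G z) = F z

namespace IsHolomorphicLogOn

variable {F G : ℂ → ℂ} {s : Set ℂ} {z : ℂ}

lemma re_eq (h : IsHolomorphicLogOn G F s) (hz : z ∈ s) : (G z).re = Real.log ‖F z‖ := by
  rw [← h.exp_eq z hz, Complex.norm_exp, Real.log_exp]

lemma deriv_eq (h : IsHolomorphicLogOn G F s) (hs : IsOpen s) (hz : z ∈ s) :
    deriv G z = logDeriv F z := by
  have hG : HasDerivAt G (deriv G z) z :=
    (h.differentiableOn.differentiableAt (hs.mem_nhds hz)).hasDerivAt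
  have hF : F =ᶠ[𝓝 z] fun w ↦ Complex.exp (G w) := by
    filter_upwards [hs.mem_nhds hz] with w hw using (h.exp_eq w hw).symm
  rw [logDeriv_apply, (hG.cexp.congr_of_eventuallyEq hF).deriv, hF.eq_of_nhds,
    mul_div_cancel_left₀ _ (Complex.exp_ne_zero _)]

end IsHolomorphicLogOn

lemma exists_isHolomorphicLogOn_ball {F : ℂ → ℂ} {c : ℂ} {R : ℝ} (hR : 0 < R)
    (hF : DifferentiableOn ℂ F (ball c R)) (h0 : ∀ z ∈ ball c R, F z ≠ 0) :
    ∃ G, IsHolomorphicLogOn G F (ball c R) := by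
  obtain ⟨g, hg⟩ := ((hF.deriv isOpen_ball).div hF h0).isExactOn_ball
  have hderiv : ∀ z ∈ ball c R, HasDerivAt (fun z ↦ F z * Complex.exp (-g z)) 0 z := fun z hz ↦ by
    have hF' := (hF.differentiableAt (isOpen_ball.mem_nhds hz)).hasDerivAt
    refine (hF'.mul (hg z hz).neg.cexp).congr_deriv ?_
    simp only [Pi.neg_apply, Pi.div_apply]
    field_simp [h0 z hz]
    ring
  have hconst : ∀ z ∈ ball c R, F z * Complex.exp (-g z) = F c * Complex.exp (-g c) := fun z hz ↦
    isOpen_ball.is_const_of_deriv_eq_zero (convex_ball c R).isPreconnected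
      (fun w hw ↦ (hderiv w hw).differentiableAt.differentiableWithinAt)
      (fun w hw ↦ (hderiv w hw).deriv) hz (mem_ball_self hR)
  refine ⟨fun z ↦ g z + (Complex.log (F c) - g c), ?_, fun z hz ↦ ?_⟩
  · exact fun z hz ↦ ((hg z hz).differentiableAt.add_const _).differentiableWithinAt
  · rw [Complex.exp_add, Complex.exp_sub, Complex.exp_log (h0 c (mem_ball_self hR)),
      div_eq_mul_inv, ← Complex.exp_neg, ← hconst z hz, mul_left_comm, ← Complex.exp_add,
      add_neg_cancel, Complex.exp_zero, mul_one]

end HolomorphicLog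

section CircleAverage

open Real (cos circleAverage)

open scoped Real

variable {r t τ M : ℝ}

lemma mul_sq_le_one_sub_cos (h0 : 0 ≤ τ) (h1 : τ ≤ 1) : 43 / 96 * τ ^ 2 ≤ 1 - cos τ := by
  have h := (abs_le.1 (Real.cos_bound (x := τ) (by rwa [abs_of_nonneg h0]))).2
  rw [abs_of_nonneg h0] at h
  linarith [pow_le_pow_of_le_one h0 h1 (by norm_num : 2 ≤ 4)]

lemma one_fifth_le_one_sub_cos (h1 : 1 ≤ τ) (hpi : τ ≤ π) : 1 / 5 ≤ 1 - cos τ := by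
  have h := Real.cos_le_one_sub_mul_cos_sq (x := τ) (by rwa [abs_of_nonneg (by linarith)])
  have hpi_sq : (1 : ℝ) / 5 ≤ 2 / π ^ 2 := by
    rw [div_le_div_iff₀ (by norm_num) (by positivity)]
    nlinarith [Real.pi_lt_d2, Real.pi_pos]
  have hτ : 2 / π ^ 2 ≤ 2 / π ^ 2 * τ ^ 2 :=
    le_mul_of_one_le_right (by positivity) (one_le_pow₀ h1)
  linarith

lemma one_div_sub_half_le_of_le_one (hτ0 : 0 ≤ τ) (hτ1 : τ ≤ 1) (hr : 0 ≤ r)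
    (hrτ : (11 / 6) ^ 2 ≤ r * τ ^ 2) :
    1 / 2 < r * (1 - cos τ) ∧ 1 / (r * (1 - cos τ) - 1 / 2) ≤ 67 / 20 / r * (τ ^ 2)⁻¹ := by
  have h : r * (43 / 96 * τ ^ 2) ≤ r * (1 - cos τ) := by
    gcongr
    exact mul_sq_le_one_sub_cos hτ0 hτ1
  refine ⟨by linarith, ?_⟩
  rw [← div_eq_mul_inv, div_div, div_le_div_iff₀ (by linarith) (by linarith)]
  linarith

lemma one_div_sub_half_le_of_one_le (hτ1 : 1 ≤ τ) (hpi : τ ≤ π) (hr : 128 ≤ r) :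
    1 / 2 < r * (1 - cos τ) ∧ 1 / (r * (1 - cos τ) - 1 / 2) ≤ 51 / 10 / r := by
  have h : r * (1 / 5) ≤ r * (1 - cos τ) := by
    gcongr
    exact one_fifth_le_one_sub_cos hτ1 hpi
  refine ⟨by linarith, ?_⟩
  rw [div_le_div_iff₀ (by linarith) (by linarith)]
  linarith

lemma integral_inv_sq {a b : ℝ} (ha : 0 < a) (hab : a ≤ b) :
    ∫ x in a..b, (x ^ 2)⁻¹ = a⁻¹ - b⁻¹ := by
  have h0 : (0 : ℝ) ∉ uIcc a b := by
    rw [uIcc_of_le hab]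
    exact fun h ↦ ha.not_ge h.1
  have h := integral_zpow (n := -2) (Or.inr ⟨by norm_num, h0⟩)
  norm_num [zpow_neg] at h
  rw [h]
  ring

variable {u : ℝ → ℝ}

lemma integral_le_one_le (ht0 : 0 < t) (ht1 : t ≤ 1) (hr : 0 ≤ r) (hrt : (11 / 6) ^ 2 ≤ r * t ^ 2)
    (hu : Continuous u)
    (hpeak : ∀ τ, 1 / 2 < r * (1 - cos τ) → u τ ≤ 1 / (r * (1 - cos τ) - 1 / 2)) :
    ∫ τ in t..1, u τ ≤ 67 / 20 / r * (t⁻¹ - 1) := by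
  have hint : IntervalIntegrable (fun τ : ℝ ↦ 67 / 20 / r * (τ ^ 2)⁻¹) volume t 1 :=
    ContinuousOn.intervalIntegrable_of_Icc ht1 <| continuousOn_const.mul <|
      (continuousOn_pow 2).inv₀ fun τ hτ ↦ pow_ne_zero _ (ht0.trans_le hτ.1).ne'
  calc ∫ τ in t..1, u τ ≤ ∫ τ in t..1, 67 / 20 / r * (τ ^ 2)⁻¹ := by
        refine intervalIntegral.integral_mono_on ht1 (hu.intervalIntegrable _ _) hint fun τ hτ ↦ ?_
        have hrτ : r * t ^ 2 ≤ r * τ ^ 2 := by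
          gcongr
          exact hτ.1
        obtain ⟨hlt, hle⟩ := one_div_sub_half_le_of_le_one (ht0.le.trans hτ.1) hτ.2 hr
          (hrt.trans hrτ)
        exact (hpeak τ hlt).trans hle
    _ = 67 / 20 / r * (t⁻¹ - 1) := by
        rw [intervalIntegral.integral_const_mul, integral_inv_sq ht0 ht1, inv_one]

lemma integral_one_pi_le (hr : 128 ≤ r) (hu : Continuous u)
    (hpeak : ∀ τ, 1 / 2 < r * (1 - cos τ) → u τ ≤ 1 / (r * (1 - cos τ) - 1 / 2)) :
    ∫ τ in 1..π, u τ ≤ 11 / r := by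
  have hπ : 1 ≤ π := by linarith [Real.pi_gt_three]
  calc ∫ τ in 1..π, u τ ≤ ∫ τ in 1..π, 51 / 10 / r := by
        refine intervalIntegral.integral_mono_on hπ (hu.intervalIntegrable _ _) (by simp)
          fun τ hτ ↦ ?_
        obtain ⟨hlt, hle⟩ := one_div_sub_half_le_of_one_le hτ.1 hτ.2 hr
        exact (hpeak τ hlt).trans hle
    _ = (π - 1) * (51 / 10) / r := by
        rw [intervalIntegral.integral_const, smul_eq_mul, mul_div_assoc]
    _ ≤ 11 / r := by gcongr; linarith [Real.pi_lt_d2]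

lemma integral_zero_pi_le (hr : 128 ≤ r) (hu : Continuous u) (hM : ∀ τ, u τ ≤ M)
    (hpeak : ∀ τ, 1 / 2 < r * (1 - cos τ) → u τ ≤ 1 / (r * (1 - cos τ) - 1 / 2)) :
    ∫ τ in 0..π, u τ ≤ 11 / 6 * (M + 1) / √r + 11 / r := by
  have hr0 : 0 < r := by linarith
  have hs0 : 0 < √r := Real.sqrt_pos.2 hr0
  -- Here `r * t ^ 2` is constant: up to this scale the peak is too high for `hpeak` to help.
  set t := 11 / 6 / √r with ht
  have ht0 : 0 < t := by positivity
  have ht1 : t ≤ 1 := (div_le_one hs0).2 (Real.le_sqrt_of_sq_le (by linarith))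
  have hrt : r * t ^ 2 = (11 / 6) ^ 2 := by
    rw [ht, div_pow, Real.sq_sqrt hr0.le, mul_div_cancel₀ _ hr0.ne']
  have hi : ∀ a b : ℝ, IntervalIntegrable u volume a b := fun a b ↦ hu.intervalIntegrable a b
  have near : ∫ τ in 0..t, u τ ≤ 11 / 6 * M / √r := by
    refine (intervalIntegral.integral_mono_on ht0.le (hi 0 t) (by simp) fun τ _ ↦ hM τ).trans_eq ?_
    rw [intervalIntegral.integral_const, ht, smul_eq_mul]
    ring
  have middle : ∫ τ in t..1, u τ ≤ 11 / 6 / √r := by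
    calc ∫ τ in t..1, u τ ≤ 67 / 20 / r * (t⁻¹ - 1) :=
          integral_le_one_le ht0 ht1 hr0.le hrt.ge hu hpeak
      _ ≤ 67 / 20 / r * t⁻¹ := by gcongr; linarith
      _ = 67 * 6 / 220 / √r := by
          rw [ht, inv_div]
          nth_rewrite 1 [← Real.sq_sqrt hr0.le]
          field_simp
          norm_num
      _ ≤ 11 / 6 / √r := by gcongr ?_ / _; norm_num
  rw [← intervalIntegral.integral_add_adjacent_intervals (hi 0 t) (hi t π),
    ← intervalIntegral.integral_add_adjacent_intervals (hi t 1) (hi 1 π), mul_add_one, add_div]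
  linarith [integral_one_pi_le hr hu hpeak]

variable {f : ℂ → ℝ} {c : ℂ}

/-- `hpeak` controls `f` off an arc of angular width of order `1 / √r` about the leftmost point
`c - r` of the circle, where only the bound `M` is available. -/
lemma circleAverage_le_of_peak (hr : 128 ≤ r) (hf : ContinuousOn f (sphere c r))
    (hM : ∀ z ∈ sphere c r, f z ≤ M)
    (hpeak : ∀ z ∈ sphere c r, 1 / 2 < r + (z - c).re → f z ≤ 1 / (r + (z - c).re - 1 / 2)) :
    circleAverage f c r ≤ (11 / 6 * (M + 1) / √r + 11 / r) / π := by
  set u : ℝ → ℝ := fun θ ↦ f (circleMap c r (π + θ)) with hu_def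
  have hmem : ∀ θ, circleMap c r θ ∈ sphere c r := circleMap_mem_sphere c (by linarith)
  have hu : Continuous u :=
    hf.comp_continuous ((continuous_circleMap c r).comp (by fun_prop)) fun θ ↦ hmem _
  have hre : ∀ θ, r + (circleMap c r (π + θ) - c).re = r * (1 - cos θ) := fun θ ↦ by
    rw [circleMap_sub_center, circleMap_zero, Complex.re_ofReal_mul, Complex.exp_ofReal_mul_I_re,
      add_comm π, Real.cos_add_pi]
    ring
  have hupeak : ∀ θ, 1 / 2 < r * (1 - cos θ) → u θ ≤ 1 / (r * (1 - cos θ) - 1 / 2) := fun θ hθ ↦ by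
    rw [← hre] at hθ ⊢
    exact hpeak _ (hmem _) hθ
  have hright := integral_zero_pi_le hr hu (fun θ ↦ hM _ (hmem _)) hupeak
  have hleft := integral_zero_pi_le (u := fun θ ↦ u (-θ)) hr (hu.comp continuous_neg)
    (fun θ ↦ hM _ (hmem _)) fun θ hθ ↦ by
      rw [← Real.cos_neg] at hθ ⊢
      exact hupeak _ hθ
  rw [intervalIntegral.integral_comp_neg, neg_zero] at hleft
  have hsplit : circleAverage f c r = (2 * π)⁻¹ * ((∫ θ in -π..0, u θ) + ∫ θ in 0..π, u θ) := by
    rw [intervalIntegral.integral_add_adjacent_intervals (hu.intervalIntegrable _ _)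
      (hu.intervalIntegrable _ _), hu_def,
      intervalIntegral.integral_comp_add_left (fun θ ↦ f (circleMap c r θ)), add_neg_cancel,
      ← two_mul, circleAverage, smul_eq_mul]
  rw [hsplit, inv_mul_eq_div, div_le_div_iff₀ (by positivity) Real.pi_pos]
  linarith [mul_le_mul_of_nonneg_right (add_le_add hleft hright) Real.pi_nonneg]

end CircleAverage

section NormalizedZeta

/-- The function `(s - 1) ζ(s) / (s + 9)`: the numerator removes the pole of `ζ` at `1`, and the
denominator compensates the growth of `s - 1`. Any sufficiently large constant could replace `9`;
a large value makes the contribution of this factor at `s = 1` small. -/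
noncomputable def normalizedZeta (s : ℂ) : ℂ := riemannZeta₁ s / (s + 9)

variable {s : ℂ} {r σ : ℝ}

lemma add_nine_ne_zero (hs : 0 < s.re) : s + 9 ≠ 0 := fun h ↦ by
  have hre := congrArg Complex.re h
  rw [Complex.add_re, Complex.re_ofNat, Complex.zero_re] at hre
  linarith

lemma differentiableAt_normalizedZeta (hs : 0 < s.re) : DifferentiableAt ℂ normalizedZeta s :=
  (differentiable_riemannZeta₁ s).div (by fun_prop) (add_nine_ne_zero hs)

lemma normalizedZeta_ne_zero_of_riemannHypothesis (hRH : RiemannHypothesis) (hs : 1 / 2 < s.re) :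
    normalizedZeta s ≠ 0 :=
  div_ne_zero (riemannZeta₁_ne_zero_of_riemannHypothesis hRH hs) (add_nine_ne_zero (by linarith))

lemma norm_le_norm_add_nine (hs : 0 < s.re) : ‖s‖ ≤ ‖s + 9‖ := by
  rw [Complex.norm_def, Complex.norm_def]
  gcongr
  rw [Complex.normSq_apply, Complex.normSq_apply, Complex.add_re, Complex.add_im,
    Complex.re_ofNat, Complex.im_ofNat]
  linarith

lemma norm_sub_one_le_norm_add_nine (hs : 0 < s.re) : ‖s - 1‖ ≤ ‖s + 9‖ := by
  rw [Complex.norm_def, Complex.norm_def]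
  gcongr
  rw [Complex.normSq_apply, Complex.normSq_apply, Complex.add_re, Complex.add_im, Complex.sub_re,
    Complex.sub_im, Complex.one_re, Complex.one_im, Complex.re_ofNat, Complex.im_ofNat]
  linarith

lemma norm_normalizedZeta_le (hs : 0 < s.re) : ‖normalizedZeta s‖ ≤ 1 + ‖s - 1‖ / s.re := by
  rw [normalizedZeta, norm_div, div_le_iff₀ (norm_pos_iff.2 (add_nine_ne_zero hs)), mul_comm]
  refine (norm_riemannZeta₁_le hs).trans ?_
  gcongr
  exact norm_le_norm_add_nine hs

lemma norm_normalizedZeta_le_of_one_lt_re (hs : 1 < s.re) :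
    ‖normalizedZeta s‖ ≤ 1 + 1 / (s.re - 1) := by
  have hs0 : 0 < s.re := by linarith
  rw [normalizedZeta, norm_div, div_le_iff₀ (norm_pos_iff.2 (add_nine_ne_zero hs0)), mul_comm]
  refine (norm_riemannZeta₁_le_of_one_lt_re hs).trans ?_
  have : 0 ≤ 1 / (s.re - 1) := one_div_nonneg.2 (by linarith)
  gcongr
  exact norm_sub_one_le_norm_add_nine hs0

lemma neg_ten_div_le_log_norm_normalizedZeta (hσ : 0 < σ) :
    -(10 / σ) ≤ Real.log ‖normalizedZeta (1 + σ)‖ := by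
  have hden : ‖(1 + σ + 9 : ℂ)‖ = σ + 10 := by
    rw [← Complex.norm_of_nonneg (by linarith : 0 ≤ σ + 10)]
    push_cast
    ring_nf
  have hle : σ / (σ + 10) ≤ ‖normalizedZeta (1 + σ)‖ := by
    have h := sub_one_le_norm_riemannZeta₁_ofReal (a := 1 + σ) (by linarith)
    push_cast at h
    rw [normalizedZeta, norm_div, hden]
    gcongr
    linarith
  calc -(10 / σ) = 1 - (σ / (σ + 10))⁻¹ := by
        field_simp
        ring
    _ ≤ Real.log (σ / (σ + 10)) := Real.one_sub_inv_le_log_of_pos (by positivity)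
    _ ≤ _ := Real.log_le_log (by positivity) hle

lemma re_sub_one_add (s : ℂ) (σ : ℝ) : (s - (1 + σ)).re = s.re - 1 - σ := by
  rw [Complex.sub_re, Complex.add_re, Complex.one_re, Complex.ofReal_re, sub_add_eq_sub_sub]

lemma norm_sub_one_div_re_le_sqrt (hσ : 0 < σ) (hr : r ∈ Ioo σ (σ + 1 / 2))
    (hs : s ∈ sphere (1 + σ : ℂ) r) : ‖s - 1‖ / s.re ≤ √(1 + σ) := by
  rw [mem_sphere_iff_norm] at hs
  have hsq : (s.re - 1 - σ) ^ 2 + s.im ^ 2 = r ^ 2 := by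
    rw [← hs, ← Complex.normSq_eq_norm_sq, Complex.normSq_apply, re_sub_one_add, Complex.sub_im,
      Complex.add_im, Complex.one_im, Complex.ofReal_im]
    ring
  set v := r + (s.re - 1 - σ) with hv
  have hv0 : 0 ≤ v := by
    have h := (abs_le.1 (Complex.abs_re_le_norm (s - (1 + σ)))).1
    rw [hs, re_sub_one_add] at h
    linarith
  have hre : 1 / 2 + v ≤ s.re := by linarith [hr.2]
  rw [div_le_iff₀ (by linarith)]
  refine abs_le_of_sq_le_sq' ?_ (mul_nonneg (Real.sqrt_nonneg _) (by linarith)) |>.2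
  rw [mul_pow, Real.sq_sqrt (by linarith), ← Complex.normSq_eq_norm_sq, Complex.normSq_apply,
    Complex.sub_re, Complex.sub_im, Complex.one_re, Complex.one_im, sub_zero]
  calc (s.re - 1) * (s.re - 1) + s.im * s.im = (r - σ) ^ 2 + 2 * σ * v := by
        rw [hv]
        linear_combination hsq
    _ ≤ (1 / 2) ^ 2 + 2 * σ * v := by
        gcongr <;> linarith [hr.1, hr.2]
    _ ≤ (1 + σ) * (1 / 2 + v) ^ 2 := by nlinarith [mul_nonneg hσ.le (sq_nonneg (1 / 2 - v))]
    _ ≤ (1 + σ) * s.re ^ 2 := by gcongr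

lemma one_half_lt_re_of_mem_ball (hs : s ∈ ball (1 + σ : ℂ) (σ + 1 / 2)) : 1 / 2 < s.re := by
  have h := (abs_lt.1 ((Complex.abs_re_le_norm _).trans_lt (mem_ball_iff_norm.1 hs))).1
  rw [re_sub_one_add] at h
  linarith

lemma exists_isHolomorphicLogOn_normalizedZeta (hRH : RiemannHypothesis) (hσ : 0 < σ) :
    ∃ G, IsHolomorphicLogOn G normalizedZeta (ball (1 + σ) (σ + 1 / 2)) :=
  exists_isHolomorphicLogOn_ball (by linarith)
    (fun s hs ↦ (differentiableAt_normalizedZeta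
      (by linarith [one_half_lt_re_of_mem_ball hs])).differentiableWithinAt)
    fun _ hs ↦ normalizedZeta_ne_zero_of_riemannHypothesis hRH (one_half_lt_re_of_mem_ball hs)

/-- A bound for `‖aⱼ‖ (σ + 1/2)ʲ`, `j ≠ 0`, where the `aⱼ` are the Taylor coefficients at `1 + σ` of
`log normalizedZeta`. -/
noncomputable def logTaylorBound (σ : ℝ) : ℝ :=
  4 * ((11 / 6 * (Real.log (1 + √(1 + σ)) + 1) / √σ + 11 / σ) / Real.pi) + 20 / σ

variable {G : ℂ → ℂ}

lemma circleAverage_max_re_log_normalizedZeta_le (hσ : 128 ≤ σ)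
    (hG : IsHolomorphicLogOn G normalizedZeta (ball (1 + σ) (σ + 1 / 2)))
    (hr : r ∈ Ioo σ (σ + 1 / 2)) :
    Real.circleAverage (fun z ↦ max (G z).re 0) (1 + σ) r ≤
      (11 / 6 * (Real.log (1 + √(1 + σ)) + 1) / √σ + 11 / σ) / Real.pi := by
  have hσ0 : 0 < σ := by linarith
  have hσr : σ ≤ r := hr.1.le
  have hball : sphere (1 + σ : ℂ) r ⊆ ball (1 + σ) (σ + 1 / 2) := sphere_subset_ball hr.2
  have hlog : 0 ≤ Real.log (1 + √(1 + σ)) := Real.log_nonneg (by simp)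
  have hpos : ∀ z ∈ sphere (1 + σ : ℂ) r, 0 < ‖normalizedZeta z‖ := fun z hz ↦ by
    rw [← hG.exp_eq z (hball hz)]
    exact norm_pos_iff.2 (Complex.exp_ne_zero _)
  have hle : Real.circleAverage (fun z ↦ max (G z).re 0) (1 + σ) r ≤
      (11 / 6 * (Real.log (1 + √(1 + σ)) + 1) / √r + 11 / r) / Real.pi := by
    refine circleAverage_le_of_peak (hσ.trans hσr) ?_ (fun z hz ↦ ?_) fun z hz hlt ↦ ?_
    · exact (Complex.continuous_re.comp_continuousOn
        (hG.differentiableOn.continuousOn.mono hball)).sup continuousOn_const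
    · refine max_le ?_ hlog
      rw [hG.re_eq (hball hz)]
      refine Real.log_le_log (hpos z hz) ((norm_normalizedZeta_le ?_).trans ?_)
      · linarith [one_half_lt_re_of_mem_ball (hball hz)]
      · gcongr
        exact norm_sub_one_div_re_le_sqrt hσ0 hr hz
    · refine max_le ?_ (one_div_nonneg.2 (by linarith))
      rw [re_sub_one_add] at hlt ⊢
      have hre : r + (z.re - 1 - σ) - 1 / 2 ≤ z.re - 1 := by linarith [hr.2]
      have hnorm := norm_normalizedZeta_le_of_one_lt_re (s := z) (by linarith)
      rw [hG.re_eq (hball hz)]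
      calc Real.log ‖normalizedZeta z‖ ≤ ‖normalizedZeta z‖ - 1 :=
            Real.log_le_sub_one_of_pos (hpos z hz)
        _ ≤ 1 / (z.re - 1) := by linarith
        _ ≤ _ := one_div_le_one_div_of_le (by linarith) hre
  refine hle.trans ?_
  gcongr

lemma norm_iteratedDeriv_log_normalizedZeta_le (hσ : 128 ≤ σ)
    (hG : IsHolomorphicLogOn G normalizedZeta (ball (1 + σ) (σ + 1 / 2))) {j : ℕ} (hj : j ≠ 0) :
    ‖iteratedDeriv j G (1 + σ)‖ ≤ j.factorial * logTaylorBound σ / (σ + 1 / 2) ^ j := by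
  have hσ0 : 0 < σ := by linarith
  refine norm_iteratedDeriv_le_of_circleAverage_le hσ0.le (by linarith) hG.differentiableOn hj
    fun r hr ↦ ?_
  have hre := neg_ten_div_le_log_norm_normalizedZeta hσ0
  rw [← hG.re_eq (mem_ball_self (by linarith))] at hre
  have haverage := circleAverage_max_re_log_normalizedZeta_le hσ hG hr
  have htwenty : 20 / σ = 2 * (10 / σ) := by ring
  rw [logTaylorBound, htwenty]
  linarith

end NormalizedZeta

section LogDeriv

variable {G : ℂ → ℂ} {s : ℂ}

lemma logDeriv_normalizedZeta (hs : 0 < s.re) (h0 : riemannZeta₁ s ≠ 0) :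
    logDeriv normalizedZeta s = logDeriv riemannZeta₁ s - (s + 9)⁻¹ := by
  have hlin : logDeriv (fun s : ℂ ↦ s + 9) s = (s + 9)⁻¹ := by
    rw [logDeriv_apply, deriv_add_const, deriv_id'', one_div]
  rw [← hlin]
  exact logDeriv_div s h0 (add_nine_ne_zero hs) (differentiable_riemannZeta₁ s) (by fun_prop)

lemma riemannZeta₁_ne_zero_of_one_lt_re (hs : 1 < s.re) : riemannZeta₁ s ≠ 0 := by
  have hs1 : s ≠ 1 := fun h ↦ hs.ne' (by rw [h, Complex.one_re])
  rw [riemannZeta₁_eq_sub_one_mul hs1]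
  exact mul_ne_zero (sub_ne_zero.2 hs1) (riemannZeta_ne_zero_of_one_lt_re hs)

lemma logDeriv_riemannZeta₁ (hs : 1 < s.re) :
    logDeriv riemannZeta₁ s = (s - 1)⁻¹ - LSeries (fun n ↦ (Λ n : ℂ)) s := by
  have hs1 : s ≠ 1 := fun h ↦ hs.ne' (by rw [h, Complex.one_re])
  have heq : riemannZeta₁ =ᶠ[𝓝 s] fun w ↦ (w - 1) * riemannZeta w := by
    filter_upwards [isOpen_ne.mem_nhds hs1] with w hw using riemannZeta₁_eq_sub_one_mul hw
  rw [(logDeriv_congr_nhds heq).eq_of_nhds,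
    logDeriv_mul (f := fun w ↦ w - 1) s (sub_ne_zero.2 hs1)
      (riemannZeta_ne_zero_of_one_lt_re hs) (by fun_prop) (differentiableAt_riemannZeta hs1),
    LSeries_vonMangoldt_eq_deriv_riemannZeta_div hs, logDeriv_apply, logDeriv_apply,
    deriv_sub_const, deriv_id'', one_div, neg_div, sub_neg_eq_add]

lemma hasDerivAt_deriv_riemannZeta₁_one :
    HasDerivAt (deriv riemannZeta₁) (2 * deriv riemannZeta₀ 1) 1 := by
  have hderiv : deriv riemannZeta₁ = fun s ↦ riemannZeta₀ s + (s - 1) * deriv riemannZeta₀ s := by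
    ext s
    have h := (((hasDerivAt_id s).sub_const 1).mul
      (differentiable_riemannZeta₀ s).hasDerivAt).const_add 1
    refine h.deriv.trans ?_
    rw [one_mul, id]
  have hd : HasDerivAt (deriv riemannZeta₀) (deriv (deriv riemannZeta₀) 1) 1 :=
    (differentiable_riemannZeta₀.deriv 1).hasDerivAt
  rw [hderiv]
  refine ((differentiable_riemannZeta₀ 1).hasDerivAt.add
    (((hasDerivAt_id (1 : ℂ)).sub_const 1).mul hd)).congr_deriv ?_
  simp only [id, sub_self, zero_mul, add_zero, one_mul]
  ring

lemma re_deriv_logDeriv_riemannZeta₁_one_le : (deriv (logDeriv riemannZeta₁) 1).re ≤ 1 := by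
  have hd := hasDerivAt_deriv_riemannZeta₁_one.div (differentiable_riemannZeta₁ 1).hasDerivAt
    (by simp)
  rw [deriv_riemannZeta₁_one, riemannZeta₁_one, mul_one, one_pow, div_one] at hd
  rw [logDeriv, hd.deriv, ← Complex.ofReal_mul, Complex.sub_re, Complex.ofReal_re, Complex.mul_re,
    Complex.re_ofNat, Complex.im_ofNat, zero_mul, sub_zero]
  linarith [re_deriv_riemannZeta₀_one_le, sq_nonneg (1 - Real.eulerMascheroniConstant)]

lemma re_iteratedDeriv_two_log_normalizedZeta_one_le {U : Set ℂ}
    (hG : IsHolomorphicLogOn G normalizedZeta U) (hU : IsOpen U) (h1 : 1 ∈ U) :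
    (iteratedDeriv 2 G 1).re ≤ 1 + 1 / 100 := by
  have heq : deriv G =ᶠ[𝓝 1] fun s ↦ logDeriv riemannZeta₁ s - (s + 9)⁻¹ := by
    have hre : ∀ᶠ s : ℂ in 𝓝 1, 0 < s.re :=
      (isOpen_lt continuous_const Complex.continuous_re).mem_nhds (by simp)
    filter_upwards [hU.mem_nhds h1, hre, riemannZeta₁_ne_zero_of_near_one] with s hs hre h0
    rw [hG.deriv_eq hU hs, logDeriv_normalizedZeta hre h0]
  have hlog : DifferentiableAt ℂ (logDeriv riemannZeta₁) 1 :=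
    (differentiable_riemannZeta₁.deriv 1).div (differentiable_riemannZeta₁ 1)
      (by simp)
  have hinv : HasDerivAt (fun s : ℂ ↦ (s + 9)⁻¹) (-(1 / 100)) 1 :=
    (((hasDerivAt_id (1 : ℂ)).add_const 9).inv (by norm_num)).congr_deriv (by norm_num)
  rw [iteratedDeriv_succ, iteratedDeriv_one, heq.deriv_eq,
    (hlog.hasDerivAt.fun_sub hinv).deriv, sub_neg_eq_add, Complex.add_re]
  exact add_le_add re_deriv_logDeriv_riemannZeta₁_one_le (by norm_num)

lemma iteratedDeriv_inv_sub_const (m : ℕ) (a z : ℂ) :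
    iteratedDeriv m (fun w ↦ (w - a)⁻¹) z = (-1) ^ m * m.factorial / (z - a) ^ (m + 1) := by
  have h := congrFun (iter_deriv_inv_linear_sub m (1 : ℂ) a) z
  simp only [one_mul, one_pow, mul_one] at h
  rw [iteratedDeriv_eq_iterate, h, ← neg_add', zpow_neg, div_eq_mul_inv, add_comm]
  norm_cast

lemma abscissaOfAbsConv_vonMangoldt_le_s16 : LSeries.abscissaOfAbsConv (fun n ↦ (Λ n : ℂ)) ≤ 1 :=
  LSeries.abscissaOfAbsConv_le_of_forall_lt_LSeriesSummable (x := 1) fun _ hy ↦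
    LSeriesSummable_vonMangoldt (by simpa using hy)

lemma iteratedDeriv_succ_log_normalizedZeta {U : Set ℂ}
    (hG : IsHolomorphicLogOn G normalizedZeta U) (hU : IsOpen U) (hsU : s ∈ U) (hs : 1 < s.re)
    (m : ℕ) : iteratedDeriv (m + 1) G s = (-1) ^ m * (m.factorial / (s - 1) ^ (m + 1) -
      m.factorial / (s + 9) ^ (m + 1) -
      LSeries (LSeries.logMul^[m] (fun n ↦ (Λ n : ℂ))) s) := by
  have habs : LSeries.abscissaOfAbsConv (fun n ↦ (Λ n : ℂ)) < s.re :=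
    abscissaOfAbsConv_vonMangoldt_le_s16.trans_lt (mod_cast hs)
  have heq : deriv G =ᶠ[𝓝 s]
      fun w ↦ (w - 1)⁻¹ - (w - -9)⁻¹ - LSeries (fun n ↦ (Λ n : ℂ)) w := by
    filter_upwards [hU.mem_nhds hsU,
      (isOpen_lt continuous_const Complex.continuous_re).mem_nhds hs] with w hwU hw
    rw [hG.deriv_eq hU hwU, logDeriv_normalizedZeta (one_pos.trans hw)
      (riemannZeta₁_ne_zero_of_one_lt_re hw),
      logDeriv_riemannZeta₁ hw, sub_neg_eq_add, sub_right_comm]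
  have h9 : s - -9 ≠ 0 := by
    rw [sub_neg_eq_add]
    exact add_nine_ne_zero (one_pos.trans hs)
  have hs1 : s - 1 ≠ 0 := sub_ne_zero.2 fun h ↦ hs.ne' (by rw [h, Complex.one_re])
  have hpole : ContDiffAt ℂ m (fun w : ℂ ↦ (w - 1)⁻¹) s := ContDiffAt.inv (by fun_prop) hs1
  have hfactor : ContDiffAt ℂ m (fun w : ℂ ↦ (w - -9)⁻¹) s := ContDiffAt.inv (by fun_prop) h9
  have hLSeries : ContDiffAt ℂ m (LSeries fun n ↦ (Λ n : ℂ)) s :=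
    (LSeries_analyticOnNhd _ s habs).contDiffAt
  rw [iteratedDeriv_succ', heq.iteratedDeriv_eq, iteratedDeriv_fun_sub (hpole.sub hfactor) hLSeries,
    iteratedDeriv_fun_sub hpole hfactor, iteratedDeriv_inv_sub_const, iteratedDeriv_inv_sub_const,
    LSeries_iteratedDeriv m habs, sub_neg_eq_add]
  ring

end LogDeriv

section TaylorTerms

variable {G : ℂ → ℂ} {σ : ℝ}

/-- The real part of the `i`-th term of the Taylor series of `G''` about `1 + σ`, evaluated at the
point `1`. For `G` a logarithm of `normalizedZeta` the sum over `i` is `Re G''(1)`, while each term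
is a Poisson-weighted sum of `Λ n * log n / n`. -/
noncomputable def secondDerivTaylorTerm (G : ℂ → ℂ) (σ : ℝ) (i : ℕ) : ℝ :=
  ((i.factorial : ℂ)⁻¹ * (-σ) ^ i * iteratedDeriv (i + 2) G (1 + σ)).re

lemma one_mem_ball_one_add {r : ℝ} (hσ : 0 ≤ σ) (hσr : σ < r) : (1 : ℂ) ∈ ball (1 + σ : ℂ) r := by
  rw [mem_ball_iff_norm, sub_add_cancel_left, norm_neg, Complex.norm_of_nonneg hσ]
  exact hσr

lemma hasSum_secondDerivTaylorTerm {r : ℝ} (hσ : 0 ≤ σ) (hσr : σ < r)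
    (hG : DifferentiableOn ℂ G (ball (1 + σ) r)) :
    HasSum (secondDerivTaylorTerm G σ) (iteratedDeriv 2 G 1).re := by
  have hd : DifferentiableOn ℂ (iteratedDeriv 2 G) (ball (1 + σ) r) := by
    rw [iteratedDeriv_succ, iteratedDeriv_one]
    exact (hG.deriv isOpen_ball).deriv isOpen_ball
  convert Complex.hasSum_re (Complex.hasSum_taylorSeries_on_ball hd
    (one_mem_ball_one_add hσ hσr)) using 1
  ext i
  rw [sub_add_cancel_left, smul_eq_mul, smul_eq_mul, ← mul_assoc,
    secondDerivTaylorTerm, iteratedDeriv_eq_iterate, iteratedDeriv_eq_iterate,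
    iteratedDeriv_eq_iterate, ← Function.iterate_add_apply]

lemma abs_secondDerivTaylorTerm_le {r Θ : ℝ} {i : ℕ} (hσ : 0 < σ)
    (hG : ‖iteratedDeriv (i + 2) G (1 + σ)‖ ≤ (i + 2).factorial * Θ / r ^ (i + 2)) :
    |secondDerivTaylorTerm G σ i| ≤ (i + 1) * (i + 2) / σ ^ 2 * Θ * (σ / r) ^ (i + 2) := by
  refine (Complex.abs_re_le_norm _).trans ?_
  rw [norm_mul, norm_mul, norm_inv, norm_pow, norm_neg, Complex.norm_natCast,
    Complex.norm_of_nonneg hσ.le]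
  calc (i.factorial : ℝ)⁻¹ * σ ^ i * ‖iteratedDeriv (i + 2) G (1 + σ)‖
      ≤ (i.factorial : ℝ)⁻¹ * σ ^ i * ((i + 2).factorial * Θ / r ^ (i + 2)) := by gcongr
    _ = _ := by
      rw [Nat.factorial_succ, Nat.factorial_succ, div_pow]
      push_cast
      field_simp
      ring

lemma LSeries_logMul_iterate_apply (f : ℕ → ℂ) (m n : ℕ) :
    LSeries.logMul^[m] f n = (Real.log n : ℂ) ^ m * f n := by
  induction m with
  | zero => simp
  | succ m ih =>
    rw [Function.iterate_succ', Function.comp_apply, LSeries.logMul, ih, ← Complex.natCast_log]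
    ring

lemma re_LSeries_term_logMul_iterate_ofReal (f : ℕ → ℝ) (m n : ℕ) {s : ℝ} (hs : s ≠ 0) :
    (LSeries.term (LSeries.logMul^[m] (fun n ↦ (f n : ℂ))) s n).re =
      f n * Real.log n ^ m / (n : ℝ) ^ s := by
  rcases eq_or_ne n 0 with rfl | hn
  · simp [Real.zero_rpow hs]
  · rw [LSeries.term_of_ne_zero hn, LSeries_logMul_iterate_apply, ← Complex.ofReal_natCast,
      ← Complex.ofReal_cpow n.cast_nonneg, mul_comm]
    exact_mod_cast rfl

lemma hasSum_vonMangoldt_mul_log_div_rpow_mul_pow {r : ℝ} (hσ : 0 < σ) (hr : 0 < r)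
    (hG : IsHolomorphicLogOn G normalizedZeta (ball (1 + σ) r)) (i : ℕ) :
    HasSum (fun n : ℕ ↦ Λ n * Real.log n / (n : ℝ) ^ (1 + σ) *
        ((σ * Real.log n) ^ i / i.factorial))
      (secondDerivTaylorTerm G σ i + (i + 1) / σ ^ 2 -
        (i + 1) * σ ^ i / (σ + 10) ^ (i + 2)) := by
  have hs : 1 < (1 + σ : ℂ).re := by simpa using hσ
  have habs : LSeries.abscissaOfAbsConv (LSeries.logMul^[i + 1] (fun n ↦ (Λ n : ℂ))) <
      (1 + σ : ℂ).re := by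
    rw [LSeries.absicssaOfAbsConv_logPowMul]
    exact abscissaOfAbsConv_vonMangoldt_le_s16.trans_lt (mod_cast hs)
  have hsum := (Complex.hasSum_re
    (LSeriesSummable_of_abscissaOfAbsConv_lt_re habs).LSeriesHasSum).mul_left (σ ^ i / i.factorial)
  have hterm : (i.factorial : ℂ)⁻¹ * (-σ) ^ i * iteratedDeriv (i + 2) G (1 + σ) =
      ((i + 1) * σ ^ i / (σ + 10) ^ (i + 2) - (i + 1) / σ ^ 2 : ℝ) +
        (σ ^ i / i.factorial : ℝ) *
          LSeries (LSeries.logMul^[i + 1] fun n ↦ (Λ n : ℂ)) (1 + σ) := by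
    have hσ0 : (σ : ℂ) ≠ 0 := mod_cast hσ.ne'
    have hσ10 : (σ + 10 : ℂ) ≠ 0 := mod_cast (by linarith : σ + 10 ≠ 0)
    have hnine : (1 + σ + 9 : ℂ) = σ + 10 := by ring
    have hfac : (i.factorial : ℂ) ≠ 0 := mod_cast i.factorial_ne_zero
    have hsign : (-1 : ℂ) ^ i * (-1) ^ (i + 1) = -1 := by
      rw [pow_succ, ← mul_assoc, ← mul_pow]
      norm_num
    rw [iteratedDeriv_succ_log_normalizedZeta hG isOpen_ball (mem_ball_self hr) hs (i + 1),
      neg_pow, mul_assoc, mul_mul_mul_comm, hsign,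
      add_sub_cancel_left, hnine, Nat.factorial_succ]
    push_cast
    field_simp
    ring
  have hvalue : secondDerivTaylorTerm G σ i + (i + 1) / σ ^ 2 -
      (i + 1) * σ ^ i / (σ + 10) ^ (i + 2) = σ ^ i / i.factorial *
        (LSeries (LSeries.logMul^[i + 1] fun n ↦ (Λ n : ℂ)) (1 + σ)).re := by
    rw [secondDerivTaylorTerm, hterm, Complex.add_re, Complex.ofReal_re, Complex.re_ofReal_mul]
    ring
  rw [hvalue]
  refine (congrArg (HasSum · _) (funext fun n ↦ ?_)).mpr hsum
  have hn := re_LSeries_term_logMul_iterate_ofReal (Λ ·) (i + 1) n (s := 1 + σ) (by linarith)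
  push_cast at hn
  rw [hn]
  ring

end TaylorTerms

section Majorant

variable {q : ℝ} {k : ℕ}

/-- Weights for which `∑ i ≤ k, majorantWeight q k i * μ ^ i / i!` majorizes `exp μ`. For `i ≤ k`
they are `1 + q ^ (k - i) - 2 * q ^ (2 * (k - i))`; the quotient form also covers `i > k`, where
they are nonpositive. -/
noncomputable def majorantWeight (q : ℝ) (k i : ℕ) : ℝ :=
  1 + q ^ k / q ^ i - 2 * (q ^ k / q ^ i) ^ 2

lemma majorantWeight_of_le (hq : 0 < q) {i : ℕ} (hi : i ≤ k) :
    majorantWeight q k i = 1 + q ^ (k - i) - 2 * (q ^ (k - i)) ^ 2 := by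
  rw [majorantWeight, pow_sub₀ q hq.ne' hi, ← div_eq_mul_inv]

lemma majorantWeight_nonneg (hq : 0 < q) (hq1 : q ≤ 1) {i : ℕ} (hi : i ≤ k) :
    0 ≤ majorantWeight q k i := by
  rw [majorantWeight_of_le hq hi]
  have hpos : 0 < q ^ (k - i) := by positivity
  have hle : q ^ (k - i) ≤ 1 := pow_le_one₀ hq.le hq1
  nlinarith

lemma abs_majorantWeight_sub_one_le (hq : 0 < q) (hq1 : q ≤ 1) {i : ℕ} (hi : i ≤ k) :
    |majorantWeight q k i - 1| ≤ q ^ (k - i) := by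
  rw [majorantWeight_of_le hq hi]
  have hpos : 0 < q ^ (k - i) := by positivity
  have hle : q ^ (k - i) ≤ 1 := pow_le_one₀ hq.le hq1
  exact abs_le.2 ⟨by nlinarith, by nlinarith⟩

lemma majorantWeight_nonpos (hq : 0 < q) (hq1 : q ≤ 1) {i : ℕ} (hi : k ≤ i) :
    majorantWeight q k i ≤ 0 := by
  have hle : 1 ≤ q ^ k / q ^ i := by
    rw [one_le_div (by positivity)]
    exact pow_le_pow_of_le_one hq.le hq1 hi
  rw [majorantWeight]
  nlinarith

lemma hasSum_majorantWeight_mul_pow_div_factorial (hq : q ≠ 0) (k : ℕ) (μ : ℝ) :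
    HasSum (fun i ↦ majorantWeight q k i * (μ ^ i / i.factorial))
      (Real.exp μ + q ^ k * (Real.exp (μ / q) - 2 * q ^ k * Real.exp (μ / q ^ 2))) := by
  have hexp (c : ℝ) : HasSum (fun i : ℕ ↦ c ^ i / i.factorial) (Real.exp c) := by
    rw [Real.exp_eq_exp_ℝ]
    exact NormedSpace.expSeries_div_hasSum_exp c
  convert (hexp μ).add (((hexp (μ / q)).sub ((hexp (μ / q ^ 2)).mul_left (2 * q ^ k))).mul_left
    (q ^ k)) using 1
  ext i
  rw [majorantWeight, div_pow μ, div_pow μ, ← pow_mul, mul_comm 2 i, pow_mul]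
  field_simp
  ring

lemma exp_le_sum_majorantWeight_mul {μ : ℝ} (hq : 0 < q) (hq1 : q ≤ 1) (hμ : 0 ≤ μ)
    (h : 2 * q ^ k * Real.exp (μ / q ^ 2) ≤ Real.exp (μ / q)) :
    Real.exp μ ≤ ∑ i ∈ Finset.range (k + 1), majorantWeight q k i * (μ ^ i / i.factorial) := by
  have htail := sum_le_hasSum (Finset.range (k + 1)) (fun i hi ↦ ?_)
    (hasSum_majorantWeight_mul_pow_div_factorial hq.ne' k μ).neg
  · have hpos : 0 ≤ q ^ k * (Real.exp (μ / q) - 2 * q ^ k * Real.exp (μ / q ^ 2)) :=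
      mul_nonneg (by positivity) (sub_nonneg.2 h)
    rw [Finset.sum_neg_distrib] at htail
    linarith
  · rw [Finset.mem_range, not_lt] at hi
    rw [neg_nonneg]
    exact mul_nonpos_of_nonpos_of_nonneg (majorantWeight_nonpos hq hq1 (by omega)) (by positivity)

lemma one_add_mul_geom_sum_sq (q : ℝ) (N : ℕ) :
    (1 + q) * ∑ m ∈ Finset.range N, (q ^ m) ^ 2 = (1 + q ^ N) * ∑ m ∈ Finset.range N, q ^ m := by
  induction N with
  | zero => simp
  | succ N ih =>
    rw [Finset.sum_range_succ, Finset.sum_range_succ, mul_add, ih]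
    linear_combination q ^ N * mul_neg_geom_sum q N

lemma geom_sum_le_two_mul_geom_sum_sq (hq : 0 ≤ q) (hq1 : q ≤ 1) (N : ℕ) :
    ∑ m ∈ Finset.range N, q ^ m ≤ 2 * ∑ m ∈ Finset.range N, (q ^ m) ^ 2 := by
  have hsum : 0 ≤ ∑ m ∈ Finset.range N, q ^ m := Finset.sum_nonneg fun m _ ↦ pow_nonneg hq m
  refine le_of_mul_le_mul_left ?_ (by linarith : 0 < 1 + q)
  rw [mul_left_comm, one_add_mul_geom_sum_sq]
  nlinarith [mul_nonneg (pow_nonneg hq N) hsum]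

lemma sum_range_succ_mul_rev (c : ℕ → ℝ) (k : ℕ) :
    ∑ i ∈ Finset.range (k + 1), ((i : ℝ) + 1) * c (k - i) =
      ∑ j ∈ Finset.range (k + 1), ∑ m ∈ Finset.range (j + 1), c m := by
  induction k with
  | zero => simp
  | succ k ih =>
    rw [Finset.sum_range_succ (fun j ↦ ∑ m ∈ Finset.range (j + 1), c m), ← ih,
      Finset.sum_range_succ', Finset.sum_range_succ c, ← Finset.sum_range_reflect c, ← add_assoc,
      ← Finset.sum_add_distrib]
    congr 1
    · refine Finset.sum_congr rfl fun i _ ↦ ?_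
      rw [Nat.add_sub_add_right, Nat.add_sub_cancel]
      push_cast
      ring
    · simp

lemma sum_range_natCast_add_one (k : ℕ) :
    ∑ i ∈ Finset.range (k + 1), ((i : ℝ) + 1) = (k + 1) * (k + 2) / 2 := by
  induction k with
  | zero => norm_num
  | succ k ih =>
    rw [Finset.sum_range_succ, ih]
    push_cast
    ring

lemma sum_majorantWeight_mul_succ_le (hq : 0 < q) (hq1 : q ≤ 1) (k : ℕ) :
    ∑ i ∈ Finset.range (k + 1), majorantWeight q k i * ((i : ℝ) + 1) ≤ (k + 1) * (k + 2) / 2 := by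
  have hweight : ∀ i ∈ Finset.range (k + 1), majorantWeight q k i * ((i : ℝ) + 1) =
      ((i : ℝ) + 1) * (1 + q ^ (k - i) - 2 * (q ^ (k - i)) ^ 2) := fun i hi ↦ by
    rw [majorantWeight_of_le hq (Nat.lt_succ_iff.1 (Finset.mem_range.1 hi)), mul_comm]
  rw [Finset.sum_congr rfl hweight,
    sum_range_succ_mul_rev (fun m ↦ 1 + q ^ m - 2 * (q ^ m) ^ 2) k]
  have hinner (j : ℕ) :
      ∑ m ∈ Finset.range (j + 1), (1 + q ^ m - 2 * (q ^ m) ^ 2) ≤ (j : ℝ) + 1 := by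
    rw [Finset.sum_sub_distrib, Finset.sum_add_distrib, ← Finset.mul_sum]
    simpa using geom_sum_le_two_mul_geom_sum_sq hq.le hq1 (j + 1)
  exact (Finset.sum_le_sum fun j _ ↦ hinner j).trans_eq (sum_range_natCast_add_one k)

lemma two_mul_pow_mul_exp_le_of_le {μ M : ℝ} (hq : 0 < q) (hq1 : q ≤ 1) (hμ : μ ≤ M)
    (hM : 2 * q ^ k * Real.exp (M / q ^ 2) ≤ Real.exp (M / q)) :
    2 * q ^ k * Real.exp (μ / q ^ 2) ≤ Real.exp (μ / q) := by
  have hsq : (M - μ) / q ≤ (M - μ) / q ^ 2 :=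
    div_le_div_of_nonneg_left (sub_nonneg.2 hμ) (by positivity)
      (pow_le_of_le_one hq.le hq1 two_ne_zero)
  rw [← le_div_iff₀ (Real.exp_pos _), ← Real.exp_sub] at hM ⊢
  refine hM.trans (Real.exp_le_exp.2 ?_)
  rw [sub_div, sub_div] at hsq
  linarith

lemma sum_le_sum_majorantWeight_mul {ι : Type*} {S : Finset ι} {a μ : ι → ℝ} {m : ℕ → ℝ} {M : ℝ}
    (hq : 0 < q) (hq1 : q ≤ 1) (ha : ∀ n ∈ S, 0 ≤ a n) (hμ : ∀ n ∈ S, 0 ≤ μ n)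
    (hμM : ∀ n ∈ S, μ n ≤ M) (hM : 2 * q ^ k * Real.exp (M / q ^ 2) ≤ Real.exp (M / q))
    (hm : ∀ i ≤ k, ∑ n ∈ S, a n * Real.exp (-μ n) * (μ n ^ i / i.factorial) ≤ m i) :
    ∑ n ∈ S, a n ≤ ∑ i ∈ Finset.range (k + 1), majorantWeight q k i * m i := by
  have hmaj : ∀ n ∈ S, a n ≤ ∑ i ∈ Finset.range (k + 1),
      majorantWeight q k i * (a n * Real.exp (-μ n) * (μ n ^ i / i.factorial)) := fun n hn ↦ by
    have hexp := exp_le_sum_majorantWeight_mul hq hq1 (hμ n hn)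
      (two_mul_pow_mul_exp_le_of_le hq hq1 (hμM n hn) hM)
    calc a n = a n * Real.exp (-μ n) * Real.exp (μ n) := by
          rw [mul_assoc, ← Real.exp_add, neg_add_cancel, Real.exp_zero, mul_one]
      _ ≤ _ := mul_le_mul_of_nonneg_left hexp (mul_nonneg (ha n hn) (Real.exp_nonneg _))
      _ = _ := by
          rw [Finset.mul_sum]
          exact Finset.sum_congr rfl fun i _ ↦ mul_left_comm ..
  refine (Finset.sum_le_sum hmaj).trans ?_
  rw [Finset.sum_comm]
  refine Finset.sum_le_sum fun i hi ↦ ?_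
  have hik : i ≤ k := Nat.lt_succ_iff.1 (Finset.mem_range.1 hi)
  rw [← Finset.mul_sum]
  exact mul_le_mul_of_nonneg_left (hm i hik) (majorantWeight_nonneg hq hq1 hik)

end Majorant

section Tails

variable {P : ℕ → ℝ} {C K q t : ℝ}

lemma add_mul_add_mul_pow_le (hC : 0 ≤ C) (ht : 0 ≤ t) {N : ℝ} (hN : 0 < N) (m j : ℕ) :
    (N + j) ^ 2 * C * t ^ (m + j) ≤ N ^ 2 * C * t ^ m * (t * (1 + 1 / N) ^ 2) ^ j := by
  have hbernoulli : 1 + (j : ℝ) / N ≤ (1 + 1 / N) ^ j := by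
    have h := one_add_mul_le_pow (a := 1 / N) (by linarith [one_div_pos.2 hN]) j
    rwa [mul_one_div] at h
  calc (N + j) ^ 2 * C * t ^ (m + j) = N ^ 2 * C * t ^ m * (t ^ j * (1 + j / N) ^ 2) := by
        field_simp
        ring
    _ ≤ N ^ 2 * C * t ^ m * (t ^ j * ((1 + 1 / N) ^ j) ^ 2) := by gcongr
    _ = _ := by rw [mul_pow t, ← pow_mul, ← pow_mul, mul_comm j 2]

lemma sum_range_le_add_of_abs_le (hC : 0 ≤ C) (ht : 0 ≤ t) (hP : HasSum P K)
    (hb : ∀ i : ℕ, |P i| ≤ (i + 1) * (i + 2) * C * t ^ (i + 2)) (k : ℕ)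
    (hlt : t * (1 + 1 / (k + 3 : ℝ)) ^ 2 < 1) :
    ∑ i ∈ Finset.range (k + 1), P i ≤
      K + (k + 3) ^ 2 * C * t ^ (k + 3) / (1 - t * (1 + 1 / (k + 3 : ℝ)) ^ 2) := by
  have htail := (hasSum_nat_add_iff' (k + 1)).2 hP
  have hgeom := (hasSum_geometric_of_lt_one (by positivity) hlt).mul_left
    ((k + 3) ^ 2 * C * t ^ (k + 3))
  have hle := hasSum_le (fun j ↦ ?_) htail.neg hgeom
  · rw [div_eq_mul_inv]
    linarith
  refine (neg_le_abs _).trans ((hb _).trans (le_trans ?_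
    (add_mul_add_mul_pow_le hC ht (by positivity) (k + 3) j)))
  rw [show j + (k + 1) + 2 = k + 3 + j by omega, sq]
  push_cast
  gcongr ?_ * ?_ * C * _ <;> linarith

lemma pow_sub_mul_abs_le (hC : 0 ≤ C) (hq : 0 ≤ q) (ht : 0 < t) {i k : ℕ} (hik : i ≤ k)
    (hb : |P i| ≤ (i + 1) * (i + 2) * C * t ^ (i + 2)) :
    q ^ (k - i) * |P i| ≤ (k + 2) ^ 2 * C * t ^ (k + 2) * (q / t) ^ (k - i) := by
  have hik' : (i : ℝ) ≤ k := mod_cast hik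
  have hpow : t ^ (k + 2) = t ^ (i + 2) * t ^ (k - i) := by
    rw [← pow_add]
    congr 1
    omega
  calc q ^ (k - i) * |P i| ≤ q ^ (k - i) * ((k + 2) * (k + 2) * C * t ^ (i + 2)) := by
        gcongr
        refine hb.trans ?_
        gcongr
        norm_num
    _ = _ := by
        rw [hpow, div_pow]
        field_simp

lemma sum_pow_sub_mul_abs_le (hC : 0 ≤ C) (hq : 0 ≤ q) (hqt : q < t)
    (hb : ∀ i : ℕ, |P i| ≤ (i + 1) * (i + 2) * C * t ^ (i + 2)) (k : ℕ) :
    ∑ i ∈ Finset.range (k + 1), q ^ (k - i) * |P i| ≤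
      (k + 2) ^ 2 * C * t ^ (k + 2) / (1 - q / t) := by
  have ht : 0 < t := hq.trans_lt hqt
  have hlt : q / t < 1 := (div_lt_one ht).2 hqt
  calc ∑ i ∈ Finset.range (k + 1), q ^ (k - i) * |P i|
      ≤ ∑ i ∈ Finset.range (k + 1), (k + 2) ^ 2 * C * t ^ (k + 2) * (q / t) ^ (k - i) :=
        Finset.sum_le_sum fun i hi ↦
          pow_sub_mul_abs_le hC hq ht (Nat.lt_succ_iff.1 (Finset.mem_range.1 hi)) (hb i)
    _ = (k + 2) ^ 2 * C * t ^ (k + 2) * ∑ m ∈ Finset.range (k + 1), (q / t) ^ m := by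
        rw [← Finset.mul_sum, ← Finset.sum_range_reflect fun m ↦ (q / t) ^ m, Nat.add_sub_cancel]
    _ ≤ _ := by
        rw [div_eq_mul_inv _ (1 - q / t)]
        refine mul_le_mul_of_nonneg_left ?_ (by positivity)
        exact sum_le_hasSum _ (fun _ _ ↦ by positivity)
          (hasSum_geometric_of_lt_one (by positivity) hlt)

lemma sum_majorantWeight_mul_add_le {D : ℝ} (hC : 0 ≤ C) (hD : 0 ≤ D) (hq : 0 < q) (hqt : q < t)
    (ht : t ≤ 1) (hP : HasSum P K)
    (hb : ∀ i : ℕ, |P i| ≤ (i + 1) * (i + 2) * C * t ^ (i + 2)) (k : ℕ)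
    (hlt : t * (1 + 1 / (k + 3 : ℝ)) ^ 2 < 1) :
    ∑ i ∈ Finset.range (k + 1), majorantWeight q k i * (P i + (i + 1) * D) ≤
      (k + 1) * (k + 2) / 2 * D + K +
        (k + 3) ^ 2 * C * t ^ (k + 3) / (1 - t * (1 + 1 / (k + 3 : ℝ)) ^ 2) +
        (k + 2) ^ 2 * C * t ^ (k + 2) / (1 - q / t) := by
  have hq1 : q ≤ 1 := hqt.le.trans ht
  have hterm : ∀ i ∈ Finset.range (k + 1), majorantWeight q k i * (P i + (i + 1) * D) ≤
      P i + q ^ (k - i) * |P i| + majorantWeight q k i * (i + 1) * D := fun i hi ↦ by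
    have hweight := abs_majorantWeight_sub_one_le hq hq1 (Nat.lt_succ_iff.1 (Finset.mem_range.1 hi))
    have hdiff : (majorantWeight q k i - 1) * P i ≤ q ^ (k - i) * |P i| :=
      (le_abs_self _).trans (by rw [abs_mul]; gcongr)
    linarith
  have hmain := mul_le_mul_of_nonneg_right (sum_majorantWeight_mul_succ_le hq hq1 k) hD
  have htail := sum_range_le_add_of_abs_le hC (hq.trans hqt).le hP hb k hlt
  have hcorrection := sum_pow_sub_mul_abs_le hC hq.le hqt hb k
  refine (Finset.sum_le_sum hterm).trans ?_
  rw [Finset.sum_add_distrib, Finset.sum_add_distrib, ← Finset.sum_mul]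
  linarith

end Tails

section WeightedSum

variable {x σ q : ℝ} {k : ℕ}

lemma sum_vonMangoldt_mul_log_div_mul_exp_le {G : ℂ → ℂ} {r : ℝ} (hσ : 0 < σ) (hr : 0 < r)
    (hG : IsHolomorphicLogOn G normalizedZeta (ball (1 + σ) r)) (S : Finset ℕ) (i : ℕ) :
    ∑ n ∈ S, Λ n * Real.log n / n * Real.exp (-(σ * Real.log n)) *
        ((σ * Real.log n) ^ i / i.factorial) ≤
      secondDerivTaylorTerm G σ i + (i + 1) * (1 / σ ^ 2) := by
  have hlog (n : ℕ) : 0 ≤ Real.log n := Real.log_natCast_nonneg n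
  have hterm : ∀ n ∈ S, Λ n * Real.log n / n * Real.exp (-(σ * Real.log n)) *
      ((σ * Real.log n) ^ i / i.factorial) = Λ n * Real.log n / (n : ℝ) ^ (1 + σ) *
        ((σ * Real.log n) ^ i / i.factorial) := fun n _ ↦ by
    rcases eq_or_ne n 0 with rfl | hn
    · simp
    · have hn0 : (0 : ℝ) < n := by positivity
      rw [Real.rpow_add hn0, Real.rpow_one, Real.rpow_def_of_pos hn0, Real.exp_neg, mul_comm σ,
        ← div_div, div_eq_mul_inv (Λ n * Real.log n / n)]
  have hnonneg (n : ℕ) : 0 ≤ Λ n * Real.log n / (n : ℝ) ^ (1 + σ) *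
      ((σ * Real.log n) ^ i / i.factorial) :=
    mul_nonneg (div_nonneg (mul_nonneg vonMangoldt_nonneg (hlog n)) (by positivity))
      (div_nonneg (pow_nonneg (mul_nonneg hσ.le (hlog n)) i) (by positivity))
  have hpole : 0 ≤ (i + 1) * σ ^ i / (σ + 10) ^ (i + 2) := by positivity
  have hle := sum_le_hasSum S (fun n _ ↦ hnonneg n)
    (hasSum_vonMangoldt_mul_log_div_rpow_mul_pow hσ hr hG i)
  rw [Finset.sum_congr rfl hterm, mul_one_div]
  linarith

lemma logTaylorBound_nonneg (hσ : 0 ≤ σ) : 0 ≤ logTaylorBound σ := by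
  have hlog : 0 ≤ Real.log (1 + √(1 + σ)) := Real.log_nonneg (by simp)
  rw [logTaylorBound]
  positivity

lemma sum_vonMangoldt_mul_log_div_le (hRH : RiemannHypothesis) (hx : 1 ≤ x) (hσ : 128 ≤ σ)
    (hq : 0 < q) (hqσ : q < σ / (σ + 1 / 2))
    (hmaj : 2 * q ^ k * Real.exp (σ * Real.log x / q ^ 2) ≤ Real.exp (σ * Real.log x / q))
    (hk : σ / (σ + 1 / 2) * (1 + 1 / (k + 3 : ℝ)) ^ 2 < 1) :
    ∑ n ∈ Finset.Iic ⌊x⌋₊, Λ n * Real.log n / n ≤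
      (k + 1) * (k + 2) / 2 * (1 / σ ^ 2) + (1 + 1 / 100) +
        (k + 3) ^ 2 * (logTaylorBound σ / σ ^ 2) * (σ / (σ + 1 / 2)) ^ (k + 3) /
          (1 - σ / (σ + 1 / 2) * (1 + 1 / (k + 3 : ℝ)) ^ 2) +
        (k + 2) ^ 2 * (logTaylorBound σ / σ ^ 2) * (σ / (σ + 1 / 2)) ^ (k + 2) /
          (1 - q / (σ / (σ + 1 / 2))) := by
  have hσ0 : 0 < σ := by linarith
  have hσr : σ < σ + 1 / 2 := by linarith
  have hlog (n : ℕ) : 0 ≤ Real.log n := Real.log_natCast_nonneg n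
  have ht : σ / (σ + 1 / 2) ≤ 1 := div_le_one_of_le₀ hσr.le (by positivity)
  obtain ⟨G, hG⟩ := exists_isHolomorphicLogOn_normalizedZeta hRH hσ0
  have hlogx : ∀ n ∈ Finset.Iic ⌊x⌋₊, σ * Real.log n ≤ σ * Real.log x := fun n hn ↦ by
    refine mul_le_mul_of_nonneg_left ?_ hσ0.le
    rcases eq_or_ne n 0 with rfl | hn0
    · simpa using Real.log_nonneg hx
    · exact Real.log_le_log (by positivity)
        ((Nat.le_floor_iff (by linarith)).1 (Finset.mem_Iic.1 hn))
  have hmajorant := sum_le_sum_majorantWeight_mul hq (hqσ.le.trans ht)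
    (S := Finset.Iic ⌊x⌋₊) (μ := fun n ↦ σ * Real.log n)
    (fun n _ ↦ div_nonneg (mul_nonneg vonMangoldt_nonneg (hlog n)) n.cast_nonneg)
    (fun n _ ↦ mul_nonneg hσ0.le (hlog n)) hlogx hmaj
    (fun i _ ↦ sum_vonMangoldt_mul_log_div_mul_exp_le hσ0 (by positivity) hG _ i)
  have hsum := sum_majorantWeight_mul_add_le (C := logTaylorBound σ / σ ^ 2)
    (D := 1 / σ ^ 2) (div_nonneg (logTaylorBound_nonneg hσ0.le) (sq_nonneg σ)) (by positivity)
    hq hqσ ht (hasSum_secondDerivTaylorTerm hσ0.le hσr hG.differentiableOn)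
    (fun i ↦ (abs_secondDerivTaylorTerm_le hσ0 (norm_iteratedDeriv_log_normalizedZeta_le hσ hG
      (by omega))).trans_eq (by ring)) k hk
  have hG2 := re_iteratedDeriv_two_log_normalizedZeta_one_le hG isOpen_ball
    (one_mem_ball_one_add hσ0.le hσr)
  linarith

end WeightedSum

section PrimePowers

lemma vonMangoldt_mul_log_sub_sq_div_prime_pow {p j : ℕ} (hp : p.Prime) (hj : j ≠ 0) :
    (Λ (p ^ j) * Real.log ↑(p ^ j) - Λ (p ^ j) ^ 2) / ↑(p ^ j) =
      (j - 1) / (p : ℝ) ^ j * Real.log p ^ 2 := by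
  rw [vonMangoldt_apply_pow hj, vonMangoldt_apply_prime hp, Nat.cast_pow, Real.log_pow]
  ring

lemma sum_vonMangoldt_sq_div_le_sub {N : ℕ} (hN : 8 ≤ N) :
    ∑ n ∈ Finset.Iic N, Λ n ^ 2 / (n : ℝ) ≤
      ∑ n ∈ Finset.Iic N, Λ n * Real.log n / n - Real.log 2 ^ 2 / 2 := by
  have hnonneg (n : ℕ) : 0 ≤ (Λ n * Real.log n - Λ n ^ 2) / n := by
    refine div_nonneg ?_ n.cast_nonneg
    rw [sq, ← mul_sub]
    exact mul_nonneg vonMangoldt_nonneg (sub_nonneg.2 vonMangoldt_le_log)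
  have hsubset : {2 ^ 2, 2 ^ 3} ⊆ Finset.Iic N := by
    intro n hn
    rw [Finset.mem_insert, Finset.mem_singleton] at hn
    rw [Finset.mem_Iic]
    omega
  have hgap := Finset.sum_le_sum_of_subset_of_nonneg hsubset fun n _ _ ↦ hnonneg n
  rw [Finset.sum_pair (by norm_num),
    vonMangoldt_mul_log_sub_sq_div_prime_pow Nat.prime_two two_ne_zero,
    vonMangoldt_mul_log_sub_sq_div_prime_pow Nat.prime_two three_ne_zero] at hgap
  have hsplit : ∑ n ∈ Finset.Iic N, (Λ n * Real.log n - Λ n ^ 2) / (n : ℝ) =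
      ∑ n ∈ Finset.Iic N, Λ n * Real.log n / n - ∑ n ∈ Finset.Iic N, Λ n ^ 2 / (n : ℝ) := by
    simp_rw [sub_div, Finset.sum_sub_distrib]
  norm_num1 at hgap
  linarith

end PrimePowers

section Numerics

lemma pow_mul_exp_neg_mul_le_of_le {a b c : ℝ} {n : ℕ} (ha : 0 < a) (hab : a ≤ b)
    (hn : n ≤ c * a) : b ^ n * Real.exp (-(c * b)) ≤ a ^ n * Real.exp (-(c * a)) := by
  have hexp : b / a ≤ Real.exp (b / a - 1) := by linarith [Real.add_one_le_exp (b / a - 1)]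
  have hratio : 0 ≤ b / a - 1 := sub_nonneg.2 ((one_le_div ha).2 hab)
  calc b ^ n * Real.exp (-(c * b)) = a ^ n * ((b / a) ^ n * Real.exp (-(c * b))) := by
        rw [← mul_assoc, ← mul_pow, mul_div_cancel₀ b ha.ne']
    _ ≤ a ^ n * (Real.exp (b / a - 1) ^ n * Real.exp (-(c * b))) := by
        have hb := ha.trans_le hab
        gcongr
    _ = a ^ n * Real.exp (n * (b / a - 1) - c * b) := by
        rw [← Real.exp_nat_mul, ← Real.exp_add, ← sub_eq_add_neg]
    _ ≤ a ^ n * Real.exp (c * a * (b / a - 1) - c * b) := by gcongr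
    _ = _ := by
        congr 2
        field_simp
        ring

lemma thirteen_mul_log_ten_mem_Icc : 13 * Real.log 10 ∈ Icc 29.929 29.935 := by
  have htwo := Real.log_two_gt_d9
  have htwo' := Real.log_two_lt_d9
  have hfive := Real.log_five_gt_d9
  have hfive' := Real.log_five_lt_d9
  rw [Real.log_ten_eq]
  norm_num1 at *
  constructor <;> linarith

lemma exp_neg_half_mul_thirteen_mul_log_ten_le :
    Real.exp (-(1 / 2 * (13 * Real.log 10))) ≤ 0.00000031623 := by
  refine le_of_sq_le_sq ?_ (by norm_num)
  have hmul : ((2 : ℕ) : ℝ) * -(1 / 2 * (13 * Real.log 10)) = -((13 : ℕ) * Real.log 10) := by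
    push_cast
    ring
  rw [← Real.exp_nat_mul, hmul, Real.exp_neg, ← Real.log_pow, Real.exp_log (by norm_num)]
  norm_num

lemma log_le_four_add_div {u : ℝ} (hu : 0 < u) : Real.log u ≤ 4 + u / 148 := by
  have hexp : 148 ≤ Real.exp 5 := by
    rw [show (5 : ℝ) = (5 : ℕ) * 1 by norm_num, Real.exp_nat_mul]
    calc (148 : ℝ) ≤ 2.7182818283 ^ 5 := by norm_num
      _ ≤ _ := by
        gcongr
        exact Real.exp_one_gt_d9.le
  have htangent := Real.log_le_sub_one_of_pos (div_pos hu (Real.exp_pos 5))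
  rw [Real.log_div hu.ne' (Real.exp_pos 5).ne', Real.log_exp] at htangent
  have hdiv : u / Real.exp 5 ≤ u / 148 := by gcongr
  linarith

lemma logTaylorBound_le {σ : ℝ} (hσ : 26797.69 ≤ σ) : logTaylorBound σ ≤ 0.0887 := by
  have hσ0 : 0 < σ := by linarith
  have hsqrt : 163.7 ≤ √σ := Real.le_sqrt_of_sq_le (by norm_num1 at hσ ⊢; exact hσ)
  have hlog : Real.log (1 + √(1 + σ)) ≤ 4 + (2 + √σ) / 148 := by
    refine (log_le_four_add_div (by positivity)).trans ?_
    have hone : √(1 + σ) ≤ 1 + √σ := by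
      rw [Real.sqrt_le_iff, add_sq, Real.sq_sqrt hσ0.le]
      exact ⟨by positivity, by linarith⟩
    linarith
  have hquot : (Real.log (1 + √(1 + σ)) + 1) / √σ ≤ 1 / 148 + (5 + 2 / 148) / 163.7 :=
    calc _ ≤ (4 + (2 + √σ) / 148 + 1) / √σ := by gcongr
      _ = 1 / 148 + (5 + 2 / 148) / √σ := by
        field_simp
        ring
      _ ≤ _ := by gcongr
  rw [logTaylorBound, mul_div_assoc]
  calc _ ≤ (4 : ℝ) * ((11 / 6 * (1 / 148 + (5 + 2 / 148) / 163.7) + 11 / 26797.69) / 3.14) +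
        20 / 26797.69 := by
        have hpi := Real.pi_gt_d2
        gcongr
    _ ≤ _ := by norm_num

lemma log_two_add_mul_le_mul_log {Z η : ℝ} (hZ : 841 ≤ Z) (hη : η = 7 / (10 * Z)) :
    Real.log 2 + Z ^ 2 * (η * (1 + η)) ≤ (Z ^ 2 + 2.05 * Z) * Real.log (1 + η) := by
  have hη0 : 0 < η := by
    rw [hη]
    positivity
  have hηZ : η * Z = 0.7 := by
    rw [hη]
    field_simp
    norm_num
  have hη1 : η ≤ 0.001 := by
    rw [hη, div_le_iff₀ (by positivity)]
    linarith
  have hlog : η - η ^ 2 / 2 ≤ Real.log (1 + η) := by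
    refine le_trans ?_ (Real.le_log_one_add_of_nonneg hη0.le)
    rw [le_div_iff₀ (by positivity)]
    nlinarith [pow_pos hη0 3]
  have htwo := Real.log_two_lt_d9
  calc Real.log 2 + Z ^ 2 * (η * (1 + η)) = Real.log 2 + (0.7 * Z + 0.49) := by
        rw [show Z ^ 2 * (η * (1 + η)) = η * Z * Z + (η * Z) ^ 2 by ring, hηZ]
        norm_num
    _ ≤ 0.7 * Z + 1.435 - 0.245 - 0.7175 * η := by
        norm_num1 at *
        linarith
    _ = η * Z * Z + 2.05 * (η * Z) - (η * Z) ^ 2 / 2 - 1.025 * (η * Z) * η := by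
        rw [hηZ]
        ring
    _ = (Z ^ 2 + 2.05 * Z) * (η - η ^ 2 / 2) := by ring
    _ ≤ _ := by gcongr

lemma two_mul_inv_pow_mul_exp_le {η μ : ℝ} {k : ℕ} (hη : 0 < 1 + η)
    (h : Real.log 2 + μ * (η * (1 + η)) ≤ k * Real.log (1 + η)) :
    2 * (1 + η)⁻¹ ^ k * Real.exp (μ / (1 + η)⁻¹ ^ 2) ≤ Real.exp (μ / (1 + η)⁻¹) := by
  have hk : (1 + η)⁻¹ ^ k = Real.exp (-(k * Real.log (1 + η))) := by
    rw [Real.exp_neg, Real.exp_nat_mul, Real.exp_log hη, inv_pow]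
  rw [hk]
  nth_rw 1 [← Real.exp_log two_pos]
  rw [← Real.exp_add, ← Real.exp_add, inv_pow, div_inv_eq_mul, div_inv_eq_mul]
  refine Real.exp_le_exp.2 ?_
  linarith

variable {L : ℝ}

lemma two_mul_inv_pow_mul_exp_cube_mul_le (hL : 29 ≤ L) {k : ℕ}
    (hk : L ^ 4 + 2.05 * L ^ 2 ≤ k) :
    2 * (1 + 7 / (10 * L ^ 2))⁻¹ ^ k * Real.exp (L ^ 3 * L / (1 + 7 / (10 * L ^ 2))⁻¹ ^ 2) ≤
      Real.exp (L ^ 3 * L / (1 + 7 / (10 * L ^ 2))⁻¹) := by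
  have hsq : (29 : ℝ) ^ 2 ≤ L ^ 2 := by gcongr
  have hη : 0 ≤ 7 / (10 * L ^ 2) := by positivity
  refine two_mul_inv_pow_mul_exp_le (by linarith) ?_
  rw [show L ^ 3 * L = (L ^ 2) ^ 2 by ring]
  refine (log_two_add_mul_le_mul_log (by norm_num1 at hsq; exact hsq) rfl).trans
    (mul_le_mul_of_nonneg_right ?_ (Real.log_nonneg (by linarith)))
  rwa [← pow_mul]

lemma logTaylorBound_mul_pow_mul_exp_le (hL : 13 * Real.log 10 ≤ L) :
    logTaylorBound (L ^ 3) * (L ^ 5 * Real.exp (-(1 / 2 * L))) ≤ 0.676 := by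
  obtain ⟨hlow, hupp⟩ := thirteen_mul_log_ten_mem_Icc
  have hL0 : 0 ≤ L := by linarith
  have hcube : 26797.69 ≤ L ^ 3 :=
    calc (26797.69 : ℝ) ≤ 29.929 ^ 3 := by norm_num
      _ ≤ _ := by
        gcongr
        exact hlow.trans hL
  calc _ ≤ 0.0887 * ((13 * Real.log 10) ^ 5 * Real.exp (-(1 / 2 * (13 * Real.log 10)))) := by
        refine mul_le_mul (logTaylorBound_le hcube)
          (pow_mul_exp_neg_mul_le_of_le (by linarith) hL ?_) (by positivity) (by norm_num)
        norm_num1 at hlow ⊢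
        linarith
    _ ≤ 0.0887 * (29.935 ^ 5 * 0.00000031623) := by
        gcongr
        exact exp_neg_half_mul_thirteen_mul_log_ten_le
    _ ≤ _ := by norm_num

lemma div_add_half_pow_le_exp (hL : 1 ≤ L) {m : ℕ} (hm : L ^ 4 + 2 * L ^ 2 ≤ m) :
    (L ^ 3 / (L ^ 3 + 1 / 2)) ^ m ≤ Real.exp (-(1 / 2 * L)) := by
  have hcube : 1 ≤ L ^ 3 := one_le_pow₀ hL
  calc _ = (-(1 / (2 * L ^ 3 + 1)) + 1) ^ m := by
        congr 1
        field_simp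
        ring
    _ ≤ Real.exp (-(1 / (2 * L ^ 3 + 1))) ^ m := by
        refine pow_le_pow_left₀ ?_ (Real.add_one_le_exp _) m
        rw [neg_add_eq_sub, sub_nonneg]
        exact div_le_one_of_le₀ (by linarith) (by positivity)
    _ = Real.exp (-(m / (2 * L ^ 3 + 1))) := by
        rw [← Real.exp_nat_mul]
        congr 1
        ring
    _ ≤ _ := by
        refine Real.exp_le_exp.2 (neg_le_neg ?_)
        rw [le_div_iff₀ (by positivity)]
        nlinarith

lemma sq_mul_logTaylorBound_mul_pow_div_le (hL : 13 * Real.log 10 ≤ L) {κ c d : ℝ} {m : ℕ}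
    (hκ : 0 ≤ κ) (hκL : κ ≤ 1.0024 * L ^ 4) (hm : L ^ 4 + 2 * L ^ 2 ≤ m) (hc : 0 < c)
    (hd : c / L ^ 3 ≤ d) :
    κ ^ 2 * (logTaylorBound (L ^ 3) / (L ^ 3) ^ 2) * (L ^ 3 / (L ^ 3 + 1 / 2)) ^ m / d ≤
      0.68 / c := by
  have hL1 : 1 ≤ L := by linarith [thirteen_mul_log_ten_mem_Icc.1]
  have hbound : 0 ≤ logTaylorBound (L ^ 3) := logTaylorBound_nonneg (by positivity)
  calc _ ≤ (1.0024 * L ^ 4) ^ 2 * (logTaylorBound (L ^ 3) / (L ^ 3) ^ 2) *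
        Real.exp (-(1 / 2 * L)) / (c / L ^ 3) := by
        gcongr
        exact div_add_half_pow_le_exp hL1 hm
    _ = 1.0024 ^ 2 * (logTaylorBound (L ^ 3) * (L ^ 5 * Real.exp (-(1 / 2 * L)))) / c := by
        field_simp
    _ ≤ 1.0024 ^ 2 * 0.676 / c := by
        gcongr
        exact logTaylorBound_mul_pow_mul_exp_le hL
    _ ≤ _ := by
        gcongr
        norm_num

lemma div_cube_le_one_sub_mul_sq (hL : 29.929 ≤ L) {N : ℝ} (hN : L ^ 4 ≤ N) :
    0.4329 / L ^ 3 ≤ 1 - L ^ 3 / (L ^ 3 + 1 / 2) * (1 + 1 / N) ^ 2 := by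
  have hL0 : 0 < L := by linarith
  have hN0 : 0 < N := by linarith [pow_pos hL0 4]
  calc 0.4329 / L ^ 3 ≤ (1 - 4 / L - 2 / (L * L ^ 4)) / (2 * L ^ 3 + 1) := by
        have hcube : (29.929 : ℝ) ^ 3 ≤ L ^ 3 := by gcongr
        have hfour : 4 / L ≤ 4 / 29.929 := by gcongr
        have htwo : 2 / (L * L ^ 4) ≤ 2 / (29.929 * 29.929 ^ 4) := by gcongr
        have hnum : 0.8662 ≤ 1 - 4 / L - 2 / (L * L ^ 4) := by
          norm_num1 at hfour htwo ⊢
          linarith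
        have hmul : 0.8662 * L ^ 3 ≤ (1 - 4 / L - 2 / (L * L ^ 4)) * L ^ 3 := by gcongr
        rw [div_le_div_iff₀ (by positivity) (by positivity)]
        norm_num1 at hcube hmul ⊢
        linarith
    _ = 1 - L ^ 3 / (L ^ 3 + 1 / 2) * (1 + 1 / L ^ 4) ^ 2 := by
        field_simp
        ring
    _ ≤ _ := by gcongr

lemma div_cube_le_one_sub_div (hL : 29.929 ≤ L) :
    20 / L ^ 3 ≤ 1 - (1 + 7 / (10 * L ^ 2))⁻¹ / (L ^ 3 / (L ^ 3 + 1 / 2)) := by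
  have : 0 < L := by linarith
  have hη : 7 / (10 * L ^ 2) ≤ 7 / (10 * 29.929 ^ 2) := by gcongr
  calc 20 / L ^ 3 ≤ (0.7 * L - 1 / 2) / (1 + 7 / (10 * L ^ 2)) / L ^ 3 := by
        gcongr
        rw [le_div_iff₀ (by positivity)]
        norm_num1 at hL hη ⊢
        linarith
    _ = _ := by
        field_simp
        ring

lemma add_one_mul_add_two_div_two_mul_le (hL : 29.929 ≤ L) {κ : ℝ} (hκ : 0 ≤ κ)
    (hκL : κ ≤ L ^ 4 + 2.05 * L ^ 2 + 1) :
    (κ + 1) * (κ + 2) / 2 * (1 / (L ^ 3) ^ 2) ≤ L ^ 2 / 2 + 2.06 := by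
  have hL0 : 0 < L := by linarith
  have hsq : (29.929 : ℝ) ^ 2 ≤ L ^ 2 := by gcongr
  rw [mul_one_div, div_le_iff₀ (by positivity), show (L ^ 3) ^ 2 = (L ^ 2) ^ 3 by ring]
  rw [show L ^ 4 = (L ^ 2) ^ 2 by ring] at hκL
  generalize L ^ 2 = Z at hsq hκL ⊢
  have hZ : 895 ≤ Z := le_trans (by norm_num) hsq
  calc (κ + 1) * (κ + 2) / 2 ≤ (κ + 2) ^ 2 / 2 := by nlinarith
    _ ≤ (Z ^ 2 + 2.05 * Z + 3) ^ 2 / 2 := by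
        gcongr ?_ ^ 2 / 2
        linarith
    _ ≤ (Z / 2 + 2.06) * Z ^ 3 := by
        have hlin : 895 * Z ≤ Z * Z := by gcongr
        have hquad : 895 * Z ^ 2 ≤ Z * Z ^ 2 := by gcongr
        norm_num1
        linarith

end Numerics

section SumMulLog

variable {x : ℝ}

lemma thirteen_mul_log_ten_le_log (hx : (10 : ℝ) ^ (13 : ℕ) ≤ x) :
    13 * Real.log 10 ≤ Real.log x := by
  simpa using Real.log_le_log (by norm_num) hx

/-- With `L = log x`, the centre is `1 + L ^ 3` and the degree `k` is slightly larger than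
`L ^ 3 * log x = L ^ 4`, the largest exponent at which the majorant is evaluated; the main term
`(k + 1) * (k + 2) / (2 * L ^ 6)` is then `L ^ 2 / 2` up to a bounded error. -/
lemma sum_vonMangoldt_mul_log_div_le_log_sq (hRH : RiemannHypothesis)
    (hx : (10 : ℝ) ^ (13 : ℕ) ≤ x) :
    ∑ n ∈ Finset.Iic ⌊x⌋₊, Λ n * Real.log n / n ≤ Real.log x ^ 2 / 2 + 4.71 := by
  have hlogx := thirteen_mul_log_ten_le_log hx
  have hL : 29.929 ≤ Real.log x := thirteen_mul_log_ten_mem_Icc.1.trans hlogx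
  set L := Real.log x
  have : 0 < L := by linarith
  have hsq : (29.929 : ℝ) ^ 2 ≤ L ^ 2 := by gcongr
  have hcube : (29.929 : ℝ) ^ 3 ≤ L ^ 3 := by gcongr
  have hfour : (29.929 : ℝ) ^ 2 * L ^ 2 ≤ (L ^ 2) ^ 2 := by
    rw [sq (L ^ 2)]
    gcongr
  obtain ⟨k, hk, hk'⟩ : ∃ k : ℕ, L ^ 4 + 2.05 * L ^ 2 ≤ k ∧ k ≤ L ^ 4 + 2.05 * L ^ 2 + 1 :=
    ⟨_, Nat.le_ceil _, (Nat.ceil_lt_add_one (by positivity)).le⟩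
  rw [← pow_mul] at hfour
  norm_num1 at hsq hcube hfour
  have hmain := add_one_mul_add_two_div_two_mul_le hL k.cast_nonneg hk'
  have hratio := div_cube_le_one_sub_mul_sq hL (N := k + 3) (by linarith)
  have hratio' := div_cube_le_one_sub_div hL
  have htail := sq_mul_logTaylorBound_mul_pow_div_le hlogx (κ := k + 3) (m := k + 3)
    (by positivity) (by linarith) (by push_cast; linarith) (by norm_num) hratio
  have htail' := sq_mul_logTaylorBound_mul_pow_div_le hlogx (κ := k + 2) (m := k + 2)
    (by positivity) (by linarith) (by push_cast; linarith) (by norm_num) hratio'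
  have hmaj := two_mul_inv_pow_mul_exp_cube_mul_le (L := L) (k := k) (by linarith) (by linarith)
  have hsum := sum_vonMangoldt_mul_log_div_le hRH (le_trans (by norm_num) hx) (by linarith)
    (by positivity) ((div_lt_one (by positivity)).1 (sub_pos.1 (lt_of_lt_of_le (by positivity)
      hratio'))) hmaj (sub_pos.1 (lt_of_lt_of_le (by positivity) hratio))
  norm_num1 at hsum hmain htail htail' ⊢
  linarith

end SumMulLog

/-- Assuming RH, for `x ≥ 10^13` we have `∑_{n ≤ x} Λ(n)²/n ≤ (log x)²/2 + 4.5222`. -/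
theorem sum_vonMangoldt_sq_div_le (hRH : RiemannHypothesis) (x : ℝ)
    (hx : (10 : ℝ) ^ (13 : ℕ) ≤ x) :
    ∑ n ∈ Finset.Iic ⌊x⌋₊, Λ n ^ 2 / (n : ℝ) ≤ Real.log x ^ 2 / 2 + 4.5222 := by
  have hweighted := sum_vonMangoldt_mul_log_div_le_log_sq hRH hx
  have hgap := sum_vonMangoldt_sq_div_le_sub (Nat.le_floor (le_trans (by norm_num) hx) : 8 ≤ ⌊x⌋₊)
  have hlog2 : 0.6931 ^ 2 ≤ Real.log 2 ^ 2 := by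
    gcongr
    exact le_trans (by norm_num) Real.log_two_gt_d9.le
  norm_num1 at hweighted hlog2 ⊢
  linarith
end
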